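/- arXiv:math/0105053 — 2 statements merged into one kernel-verified Lean document; each statement's English description precedes it below -/
import Mathlib

section
/- (i) For w, w' ∈ σ^q W, the elements w and w' are conjugate under W if and only if 𝐩_w(x) = 𝐩_{w'}(x), where 𝐩_w = 𝐩_{β,b} for w in the W-orbit of w_β(b). (ii) For w = w_β(b) and w' = w_β(b') in σ^q W (so Δ(β) ≡ q mod p), w and w' are conjugate under W if and only if f_j(w) = f_j(w') for all j = 0,…,p−1, where f_j(w) = bj (mod p) if β satisfies condition (2.6.1) for j, and f_j(w) = 0 otherwise. -/
/-!
Common framework for formalizing T. Shoji, "Green functions associated to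
complex reflection groups, II" (arXiv:math/0105053).

We model:
* `e`-partitions of `n` as functions `ZMod e → Multiset ℕ`;
* the complex reflection group `W̃ = G(e,1,n)` as the semidirect product
  `(Fin n → Multiplicative (ZMod e)) ⋊ Equiv.Perm (Fin n)`, and
  `W = G(e,p,n)` as the kernel of the mod-`p` sum character;
* the tensor space `V^{⊗n}` concretely via matrices indexed by
  `Fin n → (Σ k : ZMod e, Fin (m k))`;
* symmetric functions in the (finitely many, `m k ≥ n`) variables
  `x_i^{(k)}` in evaluated form, i.e. as functions of an assignment
  `xv : (Σ k : ZMod e, Fin (m k)) → ℂ`.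
-/

open scoped BigOperators

attribute [local instance] Classical.propDecidable

namespace GreenII

/-! ## Combinatorics of e-partitions -/

/-- An `e`-partition of `n`: a tuple of partitions (multisets of positive
integers) indexed by `ZMod e`, with total size `n`. -/
def IsEPartition (e : ℕ) [NeZero e] (n : ℕ) (α : ZMod e → Multiset ℕ) : Prop :=
  (∀ k, ∀ x ∈ α k, 0 < x) ∧ (∑ k : ZMod e, (α k).sum) = n

/-- The shift operator `θ = θ_p`, `θ(α)^{(k)} = α^{(k-d)}`. -/
def theta (e : ℕ) [NeZero e] (d : ℕ) (α : ZMod e → Multiset ℕ) : ZMod e → Multiset ℕ :=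
  fun k => α (k - (d : ZMod e))

/-- `c_{α,p}`: the size of the `θ`-orbit of `α`. -/
noncomputable def csize (e : ℕ) [NeZero e] (d : ℕ) (α : ZMod e → Multiset ℕ) : ℕ :=
  Function.minimalPeriod (theta e d) α

/-- `Δ(α) = ∑_k k · l(α^{(k)})`. -/
def Delta (e : ℕ) [NeZero e] (α : ZMod e → Multiset ℕ) : ℕ :=
  ∑ k : ZMod e, k.val * (α k).card

/-- `l(α) = ∑_k l(α^{(k)})`, the total number of parts. -/
def lenE (e : ℕ) [NeZero e] (α : ZMod e → Multiset ℕ) : ℕ :=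
  ∑ k : ZMod e, (α k).card

/-- `α` and `β` lie in the same `θ`-orbit. -/
def SameOrbit (e : ℕ) [NeZero e] (d : ℕ) (α β : ZMod e → Multiset ℕ) : Prop :=
  ∃ i, (theta e d)^[i] α = β

/-! ## The groups `W̃ = G(e,1,n)` and `W = G(e,p,n)` -/

/-- The "diagonal" part of `G(e,1,n)`. -/
abbrev NC (e n : ℕ) := Fin n → Multiplicative (ZMod e)

/-- The permutation action of `𝔖_n` on the diagonal part. -/
def permAut (e n : ℕ) (x : Equiv.Perm (Fin n)) : NC e n ≃* NC e n where
  toFun f := f ∘ ⇑x.symm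
  invFun f := f ∘ ⇑x
  left_inv f := by funext i; simp
  right_inv f := by funext i; simp
  map_mul' f g := rfl

def permHom (e n : ℕ) : Equiv.Perm (Fin n) →* MulAut (NC e n) where
  toFun x := permAut e n x
  map_one' := rfl
  map_mul' x y := rfl

/-- `W̃ = G(e,1,n) ≅ (ℤ/eℤ)^n ⋊ 𝔖_n`, with `w = x(a_1,…,a_n)` recorded as
`⟨(a_i), x⟩`. -/
abbrev Wt (e n : ℕ) := NC e n ⋊[permHom e n] Equiv.Perm (Fin n)

noncomputable instance WtFintype (e n : ℕ) [NeZero e] : Fintype (Wt e n) :=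
  Fintype.ofEquiv (NC e n × Equiv.Perm (Fin n))
    { toFun := fun x => ⟨x.1, x.2⟩
      invFun := fun x => (x.left, x.right)
      left_inv := fun _ => rfl
      right_inv := fun _ => rfl }

/-- The character `w ↦ ∑ a_i mod p` of `W̃`. -/
noncomputable def wsumHom (e p n : ℕ) (hp : p ∣ e) : Wt e n →* Multiplicative (ZMod p) where
  toFun w := Multiplicative.ofAdd (∑ i, ZMod.castHom hp (ZMod p) (w.left i).toAdd)
  map_one' := by simp
  map_mul' w w' := by
    have h : ∀ i, ((w * w').left i).toAdd
        = (w.left i).toAdd + (w'.left (w.right.symm i)).toAdd := fun _ => rfl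
    simp only [h, map_add, Finset.sum_add_distrib, ofAdd_add]
    congr 2
    exact Equiv.sum_comp w.right.symm
      (fun i => ZMod.castHom hp (ZMod p) ((w'.left i).toAdd))

/-- `W = G(e,p,n)`: the subgroup of `W̃` on which `∑ a_i ≡ 0 (mod p)`. -/
noncomputable def Wgrp (e p n : ℕ) (hp : p ∣ e) : Subgroup (Wt e n) :=
  (wsumHom e p n hp).ker

/-- `σ = t_1 ∈ W̃`. -/
def sigmaElt (e n : ℕ) [NeZero n] : Wt e n :=
  SemidirectProduct.inl (fun i => Multiplicative.ofAdd (if i = (0 : Fin n) then (1 : ZMod e) else 0))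

/-- membership in the coset `σ^q W`. -/
def inCoset (e p n : ℕ) [NeZero n] (hp : p ∣ e) (q : ℕ) (w : Wt e n) : Prop :=
  ∃ u ∈ Wgrp e p n hp, w = (sigmaElt e n) ^ q * u

/-- conjugacy under `W`. -/
def IsConjW (e p n : ℕ) (hp : p ∣ e) (w w' : Wt e n) : Prop :=
  ∃ u ∈ Wgrp e p n hp, u * w * u⁻¹ = w'

/-- The `e`-partition recording the conjugacy class of `w ∈ W̃`:
a `k`-cycle of length `l` (a cycle of the underlying permutation whose
accumulated `ZMod e`-color is `k`, fixed points counting as `1`-cycles)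
contributes a part `l` to the `k`-th component. -/
noncomputable def classOf (e n : ℕ) [NeZero e] (w : Wt e n) : ZMod e → Multiset ℕ := fun k =>
  ((w.right.cycleFactorsFinset.val.filter
      (fun c => (∑ i ∈ c.support, (w.left i).toAdd) = k)).map fun c => c.support.card)
    + Multiset.replicate
        ((Finset.univ.filter fun i : Fin n => w.right i = i ∧ (w.left i).toAdd = k).card) 1

/-! ### The standard class representative `w_α(b)` -/

/-- The list of (part, color) pairs of an `e`-partition. -/
noncomputable def partsList (e : ℕ) [NeZero e] (α : ZMod e → Multiset ℕ) : List (ℕ × ZMod e) :=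
  (Finset.univ : Finset (ZMod e)).toList.flatMap fun k => (α k).toList.map fun r => (r, k)

/-- the color datum of `w_α(b)`: each cycle carries its color at its first
point, except the first (exceptional) cycle, which carries `k - b` at its
first point and `b` at its last point. -/
noncomputable def aexc (e : ℕ) [NeZero e] (L : List (ℕ × ZMod e)) (b : ZMod e) :
    (Σ i : Fin L.length, Fin (L.get i).1) → ZMod e := fun x =>
  if (x.1 : ℕ) = 0 then
    (if (x.2 : ℕ) = 0 then (L.get x.1).2 - b else 0)
      + (if (x.2 : ℕ) = (L.get x.1).1 - 1 then b else 0)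
  else if (x.2 : ℕ) = 0 then (L.get x.1).2 else 0

/-- The standard representative `w_α(b) ∈ W̃` of the paper, 2.6: a product of
disjoint cycles matching `α`, of the form `t_{i_1}^k z` except for one
exceptional cycle `t_{i_1}^{k-b} t_{i_m}^{b} z`. -/
noncomputable def wrep (e n : ℕ) [NeZero e] (α : ZMod e → Multiset ℕ) (b : ZMod e) : Wt e n :=
  if hcard : Fintype.card (Σ i : Fin (partsList e α).length, Fin ((partsList e α).get i).1) = n then
    let φ := Fintype.equivFinOfCardEq hcard
    ⟨fun t => Multiplicative.ofAdd (aexc e (partsList e α) b (φ.symm t)),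
      φ.symm.trans ((Equiv.sigmaCongrRight fun _ => finRotate _).trans φ)⟩
  else 1

/-! ## The tensor space `V^{⊗n}` -/

/-- Basis index of `V = ⊕_k V_k`, `dim V_k = m k`. -/
abbrev BIdx (e : ℕ) [NeZero e] (m : ZMod e → ℕ) := Σ k : ZMod e, Fin (m k)

/-- Basis index of `V^{⊗n}`. -/
abbrev TIdx (e n : ℕ) [NeZero e] (m : ZMod e → ℕ) := Fin n → BIdx e m

/-- `ζ` raised to a `ZMod e` exponent. -/
noncomputable def zmpow (e : ℕ) [NeZero e] (ζ : ℂ) (c : ZMod e) : ℂ := ζ ^ c.val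

/-- the matrix of `w ∈ W̃` on `V^{⊗n}` (𝔖_n permutes the factors, and
`t_k` multiplies by `ζ^j` if the `k`-th factor lies in `V_j`). -/
noncomputable def rhoMat (e n : ℕ) [NeZero e] (ζ : ℂ) (m : ZMod e → ℕ) (w : Wt e n) :
    Matrix (TIdx e n m) (TIdx e n m) ℂ := fun b' b =>
  if b' = b ∘ ⇑w.right.symm then ∏ s, ζ ^ (((w.left s).toAdd.val) * (b' s).1.val) else 0

/-- The operator `D` (multiplication by `x_{i_1} ⋯ x_{i_n}`), with the
variables evaluated via `xv`. -/
noncomputable def Dmat (e n : ℕ) [NeZero e] (m : ZMod e → ℕ) (xv : BIdx e m → ℂ) :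
    Matrix (TIdx e n m) (TIdx e n m) ℂ :=
  Matrix.diagonal fun b => ∏ s, xv (b s)

/-- `τ` on the basis of `V`: `v_j^{(k)} ↦ v_j^{(k+d)}` (uses `m (k+d) = m k`). -/
def tauB (e : ℕ) [NeZero e] (d : ℕ) (m : ZMod e → ℕ) (hm : ∀ k, m (k + (d : ZMod e)) = m k) :
    BIdx e m → BIdx e m := fun b => ⟨b.1 + (d : ZMod e), Fin.cast (hm b.1).symm b.2⟩

/-- `g ↦ g^{⊗ n}`: the matrix of `g ∈ End V` acting diagonally on `V^{⊗n}`. -/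
noncomputable def tensorPow (e n : ℕ) [NeZero e] (m : ZMod e → ℕ)
    (g : Matrix (BIdx e m) (BIdx e m) ℂ) : Matrix (TIdx e n m) (TIdx e n m) ℂ :=
  Matrix.of fun b' b => ∏ s, g (b' s) (b s)

/-- the matrix of `τ` on `V`. -/
noncomputable def tauV (e : ℕ) [NeZero e] (d : ℕ) (m : ZMod e → ℕ)
    (hm : ∀ k, m (k + (d : ZMod e)) = m k) : Matrix (BIdx e m) (BIdx e m) ℂ :=
  fun b' b => if b' = tauB e d m hm b then 1 else 0

/-- the matrix of `τ` on `V^{⊗n}`. -/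
noncomputable def tauMat (e n : ℕ) [NeZero e] (d : ℕ) (m : ZMod e → ℕ)
    (hm : ∀ k, m (k + (d : ZMod e)) = m k) : Matrix (TIdx e n m) (TIdx e n m) ℂ :=
  tensorPow e n m (tauV e d m hm)

/-- a member of `G = GL_{m_0} × ⋯ × GL_{m_{e-1}}` (as an endomorphism of V,
invertibility stated separately). -/
def IsBlockDiag (e : ℕ) [NeZero e] (m : ZMod e → ℕ) (g : Matrix (BIdx e m) (BIdx e m) ℂ) : Prop :=
  ∀ b b' : BIdx e m, b.1 ≠ b'.1 → g b b' = 0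

/-- a block upper unitriangular matrix (product of root subgroups for the
positive roots of `G`). -/
def IsUpperUni (e : ℕ) [NeZero e] (m : ZMod e → ℕ) (g : Matrix (BIdx e m) (BIdx e m) ℂ) : Prop :=
  (∀ b, g b b = 1) ∧
    ∀ b b' : BIdx e m, b ≠ b' → ¬(b.1 = b'.1 ∧ b.2.val < b'.2.val) → g b b' = 0

/-! ## Symmetric functions (evaluated form) -/

/-- value of the variable `x_i^{(k)}` under the assignment `xv` (junk `0` out
of range). -/
noncomputable def xval (e : ℕ) [NeZero e] (m : ZMod e → ℕ) (xv : BIdx e m → ℂ)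
    (k : ZMod e) (i : ℕ) : ℂ :=
  if h : i < m k then xv ⟨k, ⟨i, h⟩⟩ else 0

/-- `h_j`: the order of the image of `j` in `ℤ/pℤ`. -/
noncomputable def hOrd (p j : ℕ) : ℕ := addOrderOf ((j : ZMod p))

/-- `j₁ d` where `j₁ = p / h_j`: the number of components of the variable
system `𝒳_j`. -/
noncomputable def Esys (p d j : ℕ) : ℕ := (p / hOrd p j) * d

/-- the variable `X_i^{(k)} = x_i^{(k)} x_i^{(k+jd)} ⋯ x_i^{(k+(h_j-1)jd)}`
of the system `𝒳_j`. -/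
noncomputable def Xvar (e : ℕ) [NeZero e] (p d : ℕ) (m : ZMod e → ℕ) (xv : BIdx e m → ℂ)
    (j k i : ℕ) : ℂ :=
  ∏ s ∈ Finset.range (hOrd p j), xval e m xv (((k + s * j * d : ℕ) : ZMod e)) i

/-- number of variables in the `k`-th component of any of the systems `𝒳_j`. -/
noncomputable def mmX (e : ℕ) [NeZero e] (m : ZMod e → ℕ) : ℕ → ℕ := fun k => m ((k : ℕ) : ZMod e)

/-- The variables of the system `𝒳_j`, as a doubly indexed family. -/
noncomputable def vvX (e : ℕ) [NeZero e] (p d : ℕ) (m : ZMod e → ℕ) (xv : BIdx e m → ℂ)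
    (j : ℕ) : ℕ → ℕ → ℂ := fun k i => Xvar e p d m xv j k i

/-- complete homogeneous symmetric polynomial `h_r` in `N` variables. -/
noncomputable def hcomp (N r : ℕ) (v : ℕ → ℂ) : ℂ :=
  ∑ c ∈ Finset.Nat.antidiagonalTuple N r, ∏ i : Fin N, v i ^ c i

/-- the parts of a partition in decreasing order (`0` beyond the length). -/
noncomputable def lamOf (μ : Multiset ℕ) (i : ℕ) : ℕ := ((μ.sort (· ≤ ·)).reverse).getD i 0

/-- Schur polynomial in `N` variables (Jacobi–Trudi). -/
noncomputable def schurFin (N : ℕ) (μ : Multiset ℕ) (v : ℕ → ℂ) : ℂ :=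
  Matrix.det (Matrix.of fun i j : Fin N =>
    if h : (0 : ℤ) ≤ (lamOf μ i + j : ℤ) - i then hcomp N ((lamOf μ i + j : ℤ) - i).toNat v
    else 0)

/-- monomial symmetric polynomial in `N` variables. -/
noncomputable def monoFin (N : ℕ) (μ : Multiset ℕ) (v : ℕ → ℂ) : ℂ :=
  ∑ c ∈ (Finset.Nat.antidiagonalTuple N μ.sum).filter
      (fun c => ((List.ofFn c : List ℕ) : Multiset ℕ).filter (fun x => 0 < x) = μ),
    ∏ i : Fin N, v i ^ c i

/-! ### generic families for a variable system with `E` components -/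

/-- `p_r^{(i)} = ∑_{k<E} u^{ik} p_r(x^{(k)})` (formula (2.2.2)/(2.4.2), with
`u` a primitive `E`-th root of unity), for the system of variables
`vv k i` (`k < E`, `i < mm k`); `p_0^{(i)} = 1`. -/
noncomputable def pGenSys (u : ℂ) (E : ℕ) (mm : ℕ → ℕ) (vv : ℕ → ℕ → ℂ) (i r : ℕ) : ℂ :=
  if r = 0 then 1 else ∑ k ∈ Finset.range E, u ^ (i * k) * ∑ s ∈ Finset.range (mm k), vv k s ^ r

/-- the power sum `p_γ` of an `E`-tuple of partitions (2.2.1). -/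
noncomputable def pAlphaSys (u : ℂ) (E : ℕ) (mm : ℕ → ℕ) (vv : ℕ → ℕ → ℂ)
    (γ : ℕ → Multiset ℕ) : ℂ :=
  ∏ k ∈ Finset.range E, ((γ k).map fun r => pGenSys u E mm vv k r).prod

/-- the Schur function `s_γ` of an `E`-tuple of partitions. -/
noncomputable def sAlphaSys (E : ℕ) (mm : ℕ → ℕ) (vv : ℕ → ℕ → ℂ) (γ : ℕ → Multiset ℕ) : ℂ :=
  ∏ k ∈ Finset.range E, schurFin (mm k) (γ k) (vv k)

/-- the monomial symmetric function `m_γ` of an `E`-tuple of partitions. -/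
noncomputable def mAlphaSys (E : ℕ) (mm : ℕ → ℕ) (vv : ℕ → ℕ → ℂ) (γ : ℕ → Multiset ℕ) : ℂ :=
  ∏ k ∈ Finset.range E, monoFin (mm k) (γ k) (vv k)

/-- the function `q_{r,±}^{(k)}(x;t)` of [S], (3.1.1). -/
noncomputable def qGenSys (t : ℂ) (E : ℕ) (mm : ℕ → ℕ) (vv : ℕ → ℕ → ℂ)
    (sgn : Bool) (k r : ℕ) : ℂ :=
  if r = 0 then 1 else
    let k' := if sgn then (k + 1) % E else (k + E - 1) % E
    ∑ i ∈ Finset.range (mm k),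
      vv k i ^ ((r : ℤ) + (mm k : ℤ) - 1 - (mm k' : ℤ)) *
        (∏ jj ∈ Finset.range (mm k'), (vv k i - t * vv k' jj)) /
        ∏ jj ∈ (Finset.range (mm k)).erase i, (vv k i - vv k jj)

/-- the function `q_{γ,±}(x;t)` of [S], (3.1.2). -/
noncomputable def qAlphaSys (t : ℂ) (E : ℕ) (mm : ℕ → ℕ) (vv : ℕ → ℕ → ℂ)
    (sgn : Bool) (γ : ℕ → Multiset ℕ) : ℂ :=
  ∏ k ∈ Finset.range E, ((γ k).map fun r => qGenSys t E mm vv sgn k r).prod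

/-- `z_β = ∏ i^{n_i} n_i!` for a partition `β = (1^{n_1} 2^{n_2} ⋯)`. -/
noncomputable def zPart (μ : Multiset ℕ) : ℂ :=
  ∏ i ∈ μ.toFinset, (i : ℂ) ^ (μ.count i) * (Nat.factorial (μ.count i) : ℂ)

/-- `z_γ(t) = z_γ ∏_{k,j} (1 - u^k t^{γ_j^{(k)}})⁻¹` for an `E`-tuple of
partitions `γ` (`u` the `E`-th root of unity), cf. (3.1.3). -/
noncomputable def zClassSys (u t : ℂ) (E : ℕ) (γ : ℕ → Multiset ℕ) : ℂ :=
  ((E : ℂ) ^ (∑ k ∈ Finset.range E, (γ k).card)) * (∏ k ∈ Finset.range E, zPart (γ k)) *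
    (∏ k ∈ Finset.range E, ((γ k).map fun r => (1 - u ^ k * t ^ r)).prod)⁻¹

/-! ### the `j`-th pieces attached to an e-partition -/

/-- the truncation `α{j} = (α^{(0)},…,α^{(j₁d-1)})` (used when `c_{α,p} ∣ j`). -/
noncomputable def braceF (e : ℕ) [NeZero e] (p d : ℕ) (j : ℕ) (α : ZMod e → Multiset ℕ) :
    ℕ → Multiset ℕ :=
  fun k => if k < Esys p d j then α ((k : ℕ) : ZMod e) else 0

/-- the `j₁d`-partition `α[j]` of `n/h` (condition (2.6.1)): component `k/h`
has parts `α_i^{(k)}/h`. -/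
noncomputable def bracketF (e : ℕ) [NeZero e] (p d : ℕ) (j : ℕ) (α : ZMod e → Multiset ℕ) :
    ℕ → Multiset ℕ :=
  fun k' => if k' < Esys p d j then (α (((hOrd p j * k' : ℕ) : ZMod e))).map (fun r => r / hOrd p j)
  else 0

/-- condition (2.6.1): `h_j` divides all parts `α_i^{(k)}`, and `h_j ∣ k`
whenever `α^{(k)} ≠ ∅`. -/
def Cond261 (e : ℕ) [NeZero e] (p j : ℕ) (α : ZMod e → Multiset ℕ) : Prop :=
  (∀ k, ∀ r ∈ α k, hOrd p j ∣ r) ∧ ∀ k : ZMod e, α k ≠ 0 → hOrd p j ∣ k.val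

/-- `s_{α{j}}(𝒳_j)`. -/
noncomputable def schurBrace (e : ℕ) [NeZero e] (p d : ℕ) (m : ZMod e → ℕ) (xv : BIdx e m → ℂ)
    (j : ℕ) (α : ZMod e → Multiset ℕ) : ℂ :=
  sAlphaSys (Esys p d j) (mmX e m) (vvX e p d m xv j) (braceF e p d j α)

/-- `p_{α[j]}(𝒳_j)` (2.6; the root of unity for the system `𝒳_j` is `ζ^h`). -/
noncomputable def pBracket (e : ℕ) [NeZero e] (p d : ℕ) (ζ : ℂ) (m : ZMod e → ℕ)
    (xv : BIdx e m → ℂ) (j : ℕ) (α : ZMod e → Multiset ℕ) : ℂ :=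
  pAlphaSys (ζ ^ hOrd p j) (Esys p d j) (mmX e m) (vvX e p d m xv j) (bracketF e p d j α)

/-- `l(α[j])`. -/
noncomputable def lenBracket (e : ℕ) [NeZero e] (p d : ℕ) (j : ℕ)
    (α : ZMod e → Multiset ℕ) : ℕ :=
  ∑ k ∈ Finset.range (Esys p d j), (bracketF e p d j α k).card

/-! ### Schur functions and power sums for `σ^q W` (2.10) -/

/-- the `j`-th component `s^j_{α,φ}` of the Schur function `𝐬_{α,φ}` for
`σ^q W` (2.10.1); the character `φ = φ_r` of `Γ_α = ⟨τ^c⟩ ≅ ℤ/(p/c)ℤ` is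
encoded by `r`, via `φ_r(τ^j) = ζ^{drj}` for `c ∣ j`. -/
noncomputable def sTuple (e : ℕ) [NeZero e] (p d q : ℕ) (ζ : ℂ) (m : ZMod e → ℕ)
    (xv : BIdx e m → ℂ) (α : ZMod e → Multiset ℕ) (r : ℕ) (j : ℕ) : ℂ :=
  if csize e d α ∣ j then
    ζ ^ (d * r * j) *
      ∑ i ∈ Finset.range (csize e d α),
        ζ ^ (q * i * d) * schurBrace e p d m xv j ((theta e d)^[i] α)
  else 0

/-- the `j`-th component `p^j_{β,b}` of the power sum `𝐩_{β,b}` for `σ^q W`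
(2.10.2). -/
noncomputable def pTuple (e : ℕ) [NeZero e] (p d : ℕ) (ζ : ℂ) (m : ZMod e → ℕ)
    (xv : BIdx e m → ℂ) (β : ZMod e → Multiset ℕ) (b : ZMod e) (j : ℕ) : ℂ :=
  if Cond261 e p j β then
    (hOrd p j : ℂ) ^ (lenBracket e p d j β) *
      zmpow e ζ (-(((Delta e β : ZMod e) + b) * ((j * d : ℕ) : ZMod e))) *
      pBracket e p d ζ m xv j β
  else 0

/-! ## The model for (extensions of) the irreducible characters of `W` -/

/-- trace of `f` on a subspace (junk `0` if not invariant). -/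
noncomputable def traceOn {V : Type*} [AddCommGroup V] [Module ℂ V]
    (S : Submodule ℂ V) (f : V →ₗ[ℂ] V) : ℂ :=
  if h : ∀ v ∈ S, f v ∈ S then LinearMap.trace ℂ S (f.restrict h) else 0

/-- the scalar by which the torus element `diag dv ∈ G` acts on a highest
weight vector of weight `α`. -/
noncomputable def weightOf (e : ℕ) [NeZero e] (m : ZMod e → ℕ) (α : ZMod e → Multiset ℕ)
    (dv : BIdx e m → ℂ) : ℂ :=
  ∏ b : BIdx e m, dv b ^ (lamOf (α b.1) b.2.val)

/-- the space of highest weight vectors of weight `α` in `V^{⊗n}`: the model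
for the irreducible `W̃`-module `Z_α` (1.3.1, 1.4). -/
noncomputable def hwSubmodule (e n : ℕ) [NeZero e] (m : ZMod e → ℕ)
    (α : ZMod e → Multiset ℕ) : Submodule ℂ (TIdx e n m → ℂ) :=
  (⨅ g ∈ {g | IsUpperUni e m g},
      Module.End.eigenspace (Matrix.mulVecLin (tensorPow e n m g)) 1) ⊓
    ⨅ dv : BIdx e m → ℂ,
      Module.End.eigenspace (Matrix.mulVecLin (tensorPow e n m (Matrix.diagonal dv)))
        (weightOf e m α dv)

/-- the model for the irreducible `W`-module `Z_{α,φ_r}`: the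
`φ_r(τ^c)`-eigenspace of `τ^c` on `Z_α`, where `c = c_{α,p}` and
`φ_r(τ^c) = ζ^{cdr}`. -/
noncomputable def ZSub (e n : ℕ) [NeZero e] (d : ℕ) (m : ZMod e → ℕ)
    (hm : ∀ k, m (k + (d : ZMod e)) = m k) (ζ : ℂ) (α : ZMod e → Multiset ℕ) (r : ℕ) :
    Submodule ℂ (TIdx e n m → ℂ) :=
  hwSubmodule e n m α ⊓
    Module.End.eigenspace (Matrix.mulVecLin ((tauMat e n d m hm) ^ (csize e d α)))
      (ζ ^ (csize e d α * d * r))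

/-- The model for the irreducible character `χ^{α,φ_r}` of `W` and for its
chosen extension `χ̃^{α,φ_r}` to `⟨σ^q⟩ ⋉ W`: the trace of `w` on the model
`Z_{α,φ_r} ⊆ V^{⊗n}`. -/
noncomputable def charExt (e n : ℕ) [NeZero e] (d : ℕ) (m : ZMod e → ℕ)
    (hm : ∀ k, m (k + (d : ZMod e)) = m k) (ζ : ℂ) (α : ZMod e → Multiset ℕ) (r : ℕ)
    (w : Wt e n) : ℂ :=
  traceOn (ZSub e n d m hm ζ α r) (Matrix.mulVecLin (rhoMat e n ζ m w))

/-! ## symbols, a-function, similarity; the reflection representation -/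

/-- the multiset of entries of the symbol `Λ(α) = α + Λ⁰` of type `(r,0)`. -/
noncomputable def entriesSym (e : ℕ) [NeZero e] (m : ZMod e → ℕ) (rsym : ℕ)
    (α : ZMod e → Multiset ℕ) : Multiset ℕ :=
  (Finset.univ : Finset (BIdx e m)).val.map fun b =>
    lamOf (α b.1) b.2.val + rsym * (m b.1 - 1 - b.2.val)

noncomputable def pairMinSum (M : Multiset ℕ) : ℕ :=
  (M.bind fun a => M.map fun b => min a b).sum

/-- the `a`-function (3.5.2) on symbols of type `(rsym, 0)`. -/
noncomputable def aVal (e : ℕ) [NeZero e] (m : ZMod e → ℕ) (rsym : ℕ)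
    (α : ZMod e → Multiset ℕ) : ℕ :=
  pairMinSum (entriesSym e m rsym α) - pairMinSum (entriesSym e m rsym (fun _ => 0))

/-- similarity of symbols: equality of entries with multiplicities. -/
def SimSym (e : ℕ) [NeZero e] (m : ZMod e → ℕ) (rsym : ℕ) (α β : ZMod e → Multiset ℕ) : Prop :=
  entriesSym e m rsym α = entriesSym e m rsym β

/-- the reflection representation `M = ℂ^n` of `W̃` (`w(e_i) = ζ^{a_i} e_{x(i)}`). -/
noncomputable def refMat (e n : ℕ) [NeZero e] (ζ : ℂ) (w : Wt e n) :
    Matrix (Fin n) (Fin n) ℂ :=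
  fun i' i => if i' = w.right i then zmpow e ζ (w.left i').toAdd else 0

/-- The functional `R_q(f)` of (4.2.1), for a function `f` on the coset `σ^q W`. -/
noncomputable def Rq (e p d n : ℕ) [NeZero e] [NeZero n] (hp : p ∣ e) (ζ t : ℂ) (q : ℕ)
    (f : Wt e n → ℂ) : ℂ :=
  (ζ ^ (q * d) * t ^ (d * n) - 1) * (∏ i ∈ Finset.Icc 1 (n - 1), (t ^ (e * i) - 1)) *
    (Nat.card (Wgrp e p n hp) : ℂ)⁻¹ *
    ∑ w ∈ Finset.univ.filter (fun w => inCoset e p n hp q w),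
      (refMat e n ζ w).det * f w / (t • (1 : Matrix (Fin n) (Fin n) ℂ) - refMat e n ζ w).det

/-- `N^*`: the number of reflections in `W`. -/
noncomputable def Nstar (e p n : ℕ) [NeZero e] (hp : p ∣ e) (ζ : ℂ) : ℕ :=
  Nat.card {w : Wt e n // w ∈ Wgrp e p n hp ∧ w ≠ 1 ∧ (refMat e n ζ w - 1).rank = 1}

end GreenII
namespace GreenII

/-- the invariant `f_j(w_β(b))` of (2.12.2). -/
noncomputable def fjInv (e p : ℕ) [NeZero e] (hp : p ∣ e) (β : ZMod e → Multiset ℕ)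
    (b : ZMod e) (j : ℕ) : ZMod p :=
  if Cond261 e p j β then ZMod.castHom hp (ZMod p) b * (j : ZMod p) else 0

/-!
Let `χ : W̃ → ℤ/p` be the homomorphism with kernel `W`, let `w = w_β(0)`, and let `I` be the image
under `χ` of the centralizer of `w` in `W̃`. Conjugating `w` by an element of `χ`-value `b` gives
`w_β(b)`, so `w_β(b)` and `w_β(b')` are conjugate under `W` iff `b - b' ∈ I`. Since the centralizer
is built cycle by cycle, `j ∈ ℤ/p` annihilates `I` iff it annihilates the length and the color of
every cycle of `w`, which is condition (2.6.1); and a subgroup of `ℤ/p` is the annihilator of its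
annihilator. This is (ii).

For (i), `β` records the lengths and colors of the cycles, so it is invariant under conjugation in
`W̃`. It is also determined by the component `j = 0`, as the power sums `p_r` with `r ≤ n` in at
least `n` variables over `ℂ` take arbitrary values independently of one another. For a given `β`,
the `j`-th component determines `f_j` and vice versa, because `ζ` is a primitive root of unity and
`p_{β[j]}(𝒳_j)` is not identically zero.
-/

theorem exists_ker_conj_iff {G A : Type*} [Group G] [CommGroup A] (χ : G →* A) (w x y : G) :
    (∃ u ∈ χ.ker, u * (x * w * x⁻¹) * u⁻¹ = y * w * y⁻¹) ↔
      χ y / χ x ∈ (Subgroup.centralizer {w}).map χ := by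
  simp only [Subgroup.mem_map, Subgroup.mem_centralizer_singleton_iff]
  constructor
  · rintro ⟨u, hu, h⟩
    refine ⟨x⁻¹ * u⁻¹ * y, ?_, ?_⟩
    · have h' : u * x * w = y * w * y⁻¹ * (u * x) := by
        rw [← h]; group
      calc x⁻¹ * u⁻¹ * y * w = x⁻¹ * u⁻¹ * (y * w * y⁻¹ * (u * x)) * (x⁻¹ * u⁻¹ * y) := by group
        _ = w * (x⁻¹ * u⁻¹ * y) := by rw [← h']; group
    · rw [MonoidHom.mem_ker] at hu
      simp only [map_mul, map_inv, hu, inv_one, mul_one]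
      rw [mul_comm, div_eq_mul_inv]
  · rintro ⟨z, hz, hzχ⟩
    refine ⟨y * z⁻¹ * x⁻¹, ?_, ?_⟩
    · rw [MonoidHom.mem_ker]
      simp only [map_mul, map_inv, hzχ, div_eq_mul_inv, mul_inv, inv_inv]
      rw [mul_inv_cancel_left, mul_inv_cancel]
    · have hz' : z⁻¹ * w * z = w := by rw [mul_assoc, ← hz]; group
      calc _ = y * (z⁻¹ * w * z) * y⁻¹ := by group
        _ = _ := by rw [hz']

/-! ### Subgroups of `ℤ/pℤ` -/

theorem mem_addSubgroup_zmod_iff {p : ℕ} [NeZero p] (S : AddSubgroup (ZMod p)) (x : ZMod p) :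
    x ∈ S ↔ ∀ j : ZMod p, (∀ y ∈ S, y * j = 0) → x * j = 0 := by
  refine ⟨fun hx j hj => hj x hx, fun h => ?_⟩
  obtain ⟨g, hg⟩ := Int.subgroup_cyclic (S.comap (Int.castAddHom (ZMod p)))
  have mem_iff (z : ℤ) : (z : ZMod p) ∈ S ↔ g ∣ z := by
    rw [← Int.mem_zmultiples_iff, AddSubgroup.zmultiples_eq_closure, ← hg]
    rfl
  obtain ⟨c, hc⟩ : g ∣ p := (mem_iff p).1 (by simp)
  have hc0 : c ≠ 0 := by
    rintro rfl
    simp [NeZero.ne p] at hc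
  have mul_eq_zero_iff (z : ℤ) : (z : ZMod p) * (c : ZMod p) = 0 ↔ g ∣ z := by
    rw [← Int.cast_mul, ZMod.intCast_zmod_eq_zero_iff_dvd, hc, mul_dvd_mul_iff_right hc0]
  rw [← ZMod.intCast_zmod_cast x]
  refine (mem_iff _).2 ((mul_eq_zero_iff _).1 ?_)
  rw [ZMod.intCast_zmod_cast]
  refine h c fun y hy => ?_
  rw [← ZMod.intCast_zmod_cast y, mul_eq_zero_iff, ← mem_iff, ZMod.intCast_zmod_cast]
  exact hy

theorem mem_subgroup_zmod_iff {p : ℕ} [NeZero p] (S : Subgroup (Multiplicative (ZMod p)))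
    (x : Multiplicative (ZMod p)) :
    x ∈ S ↔ ∀ j < p, (∀ y ∈ S, y.toAdd * (j : ZMod p) = 0) → x.toAdd * (j : ZMod p) = 0 := by
  refine ⟨fun hx j _ hj => hj x hx, fun h => ?_⟩
  refine (mem_addSubgroup_zmod_iff (S.toAddSubgroup') x.toAdd).2 fun j hj => ?_
  simpa only [ZMod.natCast_zmod_val] using
    h j.val j.val_lt fun y hy => by simpa only [ZMod.natCast_zmod_val] using hj y.toAdd hy

/-! ### Power sums take arbitrary values -/

section PowerSums

variable {K : Type*} [Field K]

open Finset

/-- The elementary symmetric values `e_k` forced by Newton's identities when the power sums are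
`p_r = c r` for `r ≥ 1`. -/
noncomputable def esymmOfPsum (c : ℕ → K) : ℕ → K
  | 0 => 1
  | k + 1 => (-1) ^ (k + 2) * ((k + 1 : ℕ) : K)⁻¹ * (c (k + 1) +
      ∑ a : {a ∈ antidiagonal (k + 1) | a.1 ∈ Set.Ioo 0 (k + 1)},
        (-1) ^ a.1.1 * esymmOfPsum c a.1.1 * c a.1.2)
  decreasing_by exact (mem_filter.1 a.2).2.2

theorem eq_mul_esymmOfPsum_sub_sum [CharZero K] (c : ℕ → K) {k : ℕ} (hk : 0 < k) :
    c k = (-1) ^ (k + 1) * k * esymmOfPsum c k -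
      ∑ a ∈ antidiagonal k with a.1 ∈ Set.Ioo 0 k,
        (-1) ^ a.1 * esymmOfPsum c a.1 * c a.2 := by
  obtain ⟨k, rfl⟩ := Nat.exists_eq_succ_of_ne_zero hk.ne'
  have coeff_eq_one : (-1) ^ (k + 2) * ((k + 1 : ℕ) : K) *
      ((-1) ^ (k + 2) * ((k + 1 : ℕ) : K)⁻¹) = 1 := by
    rw [mul_mul_mul_comm, ← mul_pow, neg_one_mul, neg_neg, one_pow, one_mul,
      mul_inv_cancel₀ (Nat.cast_ne_zero.2 k.succ_ne_zero)]
  rw [Nat.succ_eq_add_one, esymmOfPsum,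
    sum_coe_sort {a ∈ antidiagonal (k + 1) | a.1 ∈ Set.Ioo 0 (k + 1)}
      fun a => (-1) ^ a.1 * esymmOfPsum c a.1 * c a.2,
    ← mul_assoc, coeff_eq_one, one_mul, add_sub_cancel_right]

theorem exists_aeval_esymm_eq [IsAlgClosed K] (n : ℕ) (E : ℕ → K) (hE : E 0 = 1) :
    ∃ x : Fin n → K, ∀ k ≤ n, MvPolynomial.aeval x (MvPolynomial.esymm (Fin n) K k) = E k := by
  let Q : Polynomial K := Polynomial.ofFn (n + 1) fun i => (-1) ^ (n - i : ℕ) * E (n - i)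
  have coeff_Q {i : ℕ} (hi : i ≤ n) : Q.coeff i = (-1) ^ (n - i) * E (n - i) :=
    Polynomial.ofFn_coeff_eq_val_of_lt _ (Nat.lt_succ_of_le hi)
  have coeff_Q_n : Q.coeff n = 1 := by
    rw [coeff_Q le_rfl, Nat.sub_self, pow_zero, hE, one_mul]
  have natDegree_Q : Q.natDegree = n :=
    (Nat.le_of_lt_succ (Polynomial.ofFn_natDegree_lt n.succ_pos _)).antisymm
      (Polynomial.le_natDegree_of_ne_zero (coeff_Q_n.trans_ne one_ne_zero))
  obtain ⟨l, hl⟩ := Quot.exists_rep Q.roots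
  obtain rfl : l.length = n := by
    rw [← natDegree_Q, (IsAlgClosed.splits Q).natDegree_eq_card_roots, ← hl]
    rfl
  refine ⟨l.get, fun k hk => ?_⟩
  have roots_Q : univ.val.map l.get = Q.roots := by
    rw [Fin.univ_val_map, List.ofFn_get, ← hl]
    rfl
  have vieta := Polynomial.coeff_eq_esymm_roots_of_splits (IsAlgClosed.splits Q)
    (k := l.length - k) (natDegree_Q ▸ Nat.sub_le _ _)
  rw [coeff_Q (Nat.sub_le _ _), Polynomial.leadingCoeff, natDegree_Q, coeff_Q_n, one_mul,
    Nat.sub_sub_self hk] at vieta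
  rw [MvPolynomial.aeval_esymm_eq_multiset_esymm, roots_Q]
  exact (mul_left_cancel₀ (pow_ne_zero _ (neg_ne_zero.2 one_ne_zero)) vieta).symm

theorem exists_sum_pow_eq [IsAlgClosed K] [CharZero K] (n : ℕ) (c : ℕ → K) :
    ∃ x : Fin n → K, ∀ r, 0 < r → r ≤ n → ∑ i, x i ^ r = c r := by
  obtain ⟨x, hx⟩ := exists_aeval_esymm_eq n (esymmOfPsum c) (by rw [esymmOfPsum])
  refine ⟨x, fun r => ?_⟩
  induction r using Nat.strong_induction_on with
  | _ r ih =>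
    intro hr hrn
    have aeval_psum (s : ℕ) :
        MvPolynomial.aeval x (MvPolynomial.psum (Fin n) K s) = ∑ i, x i ^ s := by
      simp only [MvPolynomial.psum, map_sum, map_pow, MvPolynomial.aeval_X]
    have newton := congrArg (MvPolynomial.aeval x)
      (MvPolynomial.psum_eq_mul_esymm_sub_sum (Fin n) K r hr)
    simp only [map_sub, map_mul, map_sum, map_pow, map_neg, map_one, map_natCast, aeval_psum,
      hx r hrn] at newton
    rw [newton, eq_mul_esymmOfPsum_sub_sum c hr]
    refine congrArg _ (sum_congr rfl fun a ha => ?_)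
    obtain ⟨ha, ha₀, har⟩ := mem_filter.1 ha
    rw [HasAntidiagonal.mem_antidiagonal] at ha
    rw [hx a.1 (by omega), ih a.2 (by omega) (by omega) (by omega)]

end PowerSums

/-! ### The group `G(e,1,n)` -/

section WreathProduct

variable {e n : ℕ}

theorem Wt_mul_left_apply (u v : Wt e n) (x : Fin n) :
    (u * v).left x = u.left x * v.left (u.right.symm x) :=
  rfl

theorem Wt_inl_mul_mul_inl_inv (f : NC e n) (w : Wt e n) :
    SemidirectProduct.inl f * w * (SemidirectProduct.inl f)⁻¹ =
      ⟨f * w.left * (f ∘ w.right.symm)⁻¹, w.right⟩ := by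
  rw [← map_inv]
  refine SemidirectProduct.ext (funext fun x => ?_) ?_
  · simp only [Wt_mul_left_apply, SemidirectProduct.mul_right, SemidirectProduct.right_inl,
      SemidirectProduct.left_inl, one_mul, Pi.mul_apply, Pi.inv_apply, Function.comp_apply]
    rfl
  · simp only [SemidirectProduct.mul_right, SemidirectProduct.right_inl, one_mul, mul_one]

theorem toAdd_wsumHom {p : ℕ} (hp : p ∣ e) (w : Wt e n) :
    (wsumHom e p n hp w).toAdd = ∑ x, ZMod.castHom hp (ZMod p) (w.left x).toAdd :=
  rfl

theorem wsumHom_inl_mulSingle {p : ℕ} (hp : p ∣ e) (x : Fin n) (b : ZMod e) :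
    wsumHom e p n hp (SemidirectProduct.inl (Pi.mulSingle x (Multiplicative.ofAdd b))) =
      Multiplicative.ofAdd (ZMod.castHom hp (ZMod p) b) := by
  refine Multiplicative.toAdd.injective ?_
  rw [toAdd_wsumHom, Finset.sum_eq_single x, SemidirectProduct.left_inl, Pi.mulSingle_eq_same]
  · rfl
  · intro y _ hy
    rw [SemidirectProduct.left_inl, Pi.mulSingle_eq_of_ne hy, toAdd_one, map_zero]
  · exact fun h => absurd (Finset.mem_univ x) h

/-- The part of `w` supported on a set `P` of points stable under the underlying permutation of
`w`; it is trivial on the other points. -/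
noncomputable def restrictTo (w : Wt e n) (P : Fin n → Prop) (hP : ∀ x, P (w.right x) ↔ P x) :
    Wt e n :=
  ⟨fun x => if P x then w.left x else 1, Equiv.Perm.ofSubtype (w.right.subtypePerm hP)⟩

theorem commute_restrictTo (w : Wt e n) (P : Fin n → Prop) (hP : ∀ x, P (w.right x) ↔ P x) :
    Commute (restrictTo w P hP) w := by
  have right_of {x : Fin n} (hx : P x) : (restrictTo w P hP).right x = w.right x :=
    Equiv.Perm.ofSubtype_apply_of_mem _ hx
  have right_of_not {x : Fin n} (hx : ¬ P x) : (restrictTo w P hP).right x = x :=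
    Equiv.Perm.ofSubtype_apply_of_not_mem _ hx
  have hP_symm (x : Fin n) : P (w.right.symm x) ↔ P x := by
    rw [← hP, Equiv.apply_symm_apply]
  have right_symm_of {x : Fin n} (hx : P x) :
      (restrictTo w P hP).right.symm x = w.right.symm x := by
    rw [Equiv.symm_apply_eq, right_of ((hP_symm x).2 hx), Equiv.apply_symm_apply]
  have right_symm_of_not {x : Fin n} (hx : ¬ P x) : (restrictTo w P hP).right.symm x = x := by
    rw [Equiv.symm_apply_eq, right_of_not hx]
  have left_apply (x : Fin n) : (restrictTo w P hP).left x = if P x then w.left x else 1 := rfl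
  refine SemidirectProduct.ext (funext fun x => ?_) (Equiv.ext fun x => ?_)
  · simp only [Wt_mul_left_apply, left_apply, hP_symm]
    split_ifs with hx
    · rw [right_symm_of hx]
    · rw [right_symm_of_not hx, one_mul, mul_one]
  · simp only [SemidirectProduct.mul_right, Equiv.Perm.mul_apply]
    by_cases hx : P x
    · rw [right_of hx, right_of ((hP x).2 hx)]
    · rw [right_of_not hx, right_of_not (mt (hP x).1 hx)]

theorem commute_inl {f : NC e n} {w : Wt e n} (h : ∀ x, f (w.right x) = f x) :
    Commute (SemidirectProduct.inl f) w := by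
  have f_symm : f ∘ w.right.symm = f :=
    funext fun x => by rw [Function.comp_apply, ← h, Equiv.apply_symm_apply]
  rw [commute_iff_eq, ← mul_inv_eq_iff_eq_mul, Wt_inl_mul_mul_inl_inv, f_symm,
    mul_comm f, mul_inv_cancel_right]

theorem map_left_right_eq_of_commute {M : Type*} [AddCommGroup M] (f : ZMod e →+ M)
    {v w : Wt e n} (hvw : Commute v w) (hf : ∀ x, f (w.left x).toAdd = 0) (x : Fin n) :
    f (v.left (w.right x)).toAdd = f (v.left x).toAdd := by
  have h := congrArg (fun u : Wt e n => f (u.left (w.right x)).toAdd) hvw.eq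
  simpa only [Wt_mul_left_apply, toAdd_mul, map_add, hf, add_zero, zero_add,
    Equiv.symm_apply_apply] using h

theorem conj_left_apply_of_right_eq (u w : Wt e n) {x : Fin n} (hx : w.right x = x) :
    (u * w * u⁻¹).left (u.right x) = w.left x := by
  have hx' : (u * w).right.symm (u.right x) = x := by
    rw [Equiv.symm_apply_eq, SemidirectProduct.mul_right, Equiv.Perm.mul_apply, hx]
  have inv_left : (u⁻¹).left x = (u.left (u.right x))⁻¹ := rfl
  rw [Wt_mul_left_apply, hx', inv_left, Wt_mul_left_apply, Equiv.symm_apply_apply,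
    mul_inv_cancel_comm]

theorem pow_left_iterate (w : Wt e n) (m : ℕ) (x : Fin n) :
    (w ^ m).left (w.right^[m] x) = ∏ i ∈ Finset.range m, w.left (w.right^[i + 1] x) := by
  induction m with
  | zero => rfl
  | succ m ih =>
    rw [pow_succ', Wt_mul_left_apply, Finset.prod_range_succ, mul_comm, ← ih]
    simp only [Function.iterate_succ_apply', Equiv.symm_apply_apply]

theorem minimalPeriod_eq_of_semiconj {X Y : Type*} {φ : X → Y} {f : X → X} {g : Y → Y}
    (hφ : Function.Injective φ) (h : Function.Semiconj φ f g) (x : X) :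
    Function.minimalPeriod g (φ x) = Function.minimalPeriod f x :=
  Function.minimalPeriod_eq_minimalPeriod_iff.2 fun m => by
    rw [Function.IsPeriodicPt, Function.IsFixedPt, ← h.iterate_right m x, hφ.eq_iff]
    rfl

/-- The length and the color of the cycle of `w` through the point `x`; the color is the
accumulated one, read off as the diagonal entry at `x` of the first power of `w` fixing `x`. -/
noncomputable def cycleDatum (w : Wt e n) (x : Fin n) : ℕ × ZMod e :=
  (Function.minimalPeriod w.right x, ((w ^ Function.minimalPeriod w.right x).left x).toAdd)

theorem cycleDatum_conj (u w : Wt e n) (x : Fin n) :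
    cycleDatum (u * w * u⁻¹) (u.right x) = cycleDatum w x := by
  have semiconj : Function.Semiconj u.right w.right (u * w * u⁻¹).right := fun y => by
    simp only [SemidirectProduct.mul_right, SemidirectProduct.inv_right, Equiv.Perm.mul_apply,
      Equiv.Perm.inv_def, Equiv.symm_apply_apply]
  have period_eq : Function.minimalPeriod (u * w * u⁻¹).right (u.right x) =
      Function.minimalPeriod w.right x :=
    minimalPeriod_eq_of_semiconj u.right.injective semiconj x
  have pow_right : (w ^ Function.minimalPeriod w.right x).right x = x := by
    have : (w ^ Function.minimalPeriod w.right x).right =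
        w.right ^ Function.minimalPeriod w.right x :=
      map_pow SemidirectProduct.rightHom w _
    rw [this, ← Equiv.Perm.iterate_eq_pow, Function.iterate_minimalPeriod]
  rw [cycleDatum, period_eq, conj_pow, conj_left_apply_of_right_eq u _ pow_right, cycleDatum]

end WreathProduct

/-! ### Rotations -/

section Rotation

variable {r : ℕ}

theorem finRotate_iterate_apply (t : Fin (r + 1)) (m : ℕ) :
    (finRotate (r + 1))^[m] t = t + Fin.ofNat (r + 1) m := by
  induction m with
  | zero => simp only [Function.iterate_zero_apply, Fin.ofNat_zero, add_zero]
  | succ m ih =>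
    rw [Function.iterate_succ_apply', ih, finRotate_apply, add_assoc]
    congr 1
    ext
    simp only [Fin.val_add, Fin.val_ofNat, Fin.val_one', Nat.mod_add_mod, Nat.add_mod_mod]

theorem minimalPeriod_finRotate (t : Fin r) : Function.minimalPeriod (finRotate r) t = r := by
  obtain _ | r := r
  · exact t.elim0
  refine Nat.dvd_right_iff_eq.1 fun m => ?_
  rw [← Function.isPeriodicPt_iff_minimalPeriod_dvd, Function.IsPeriodicPt, Function.IsFixedPt,
    finRotate_iterate_apply, add_eq_left, Fin.ext_iff, Nat.dvd_iff_mod_eq_zero]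
  rfl

theorem sum_finRotate_iterate {M : Type*} [AddCommMonoid M] (f : Fin r → M) (t : Fin r) :
    ∑ m ∈ Finset.range r, f ((finRotate r)^[m] t) = ∑ s, f s := by
  obtain _ | r := r
  · exact t.elim0
  rw [Finset.sum_range fun m => f ((finRotate (r + 1))^[m] t)]
  simp only [finRotate_iterate_apply, Fin.ofNat_val_eq_self]
  exact Equiv.sum_comp (Equiv.addLeft t) f

theorem eq_of_finRotate_invariant {M : Type*} {f : Fin r → M}
    (hf : ∀ t, f (finRotate r t) = f t) (s t : Fin r) : f s = f t := by
  have := s.neZero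
  have iterate_eq (m : ℕ) : f ((finRotate r)^[m] t) = f t := by
    induction m with
    | zero => rfl
    | succ m ih => rw [Function.iterate_succ_apply', hf, ih]
  rw [← iterate_eq (s - t).val, ← finCycle_eq_finRotate_iterate, finCycle_apply,
    add_sub_cancel]

theorem finRotate_symm_val_eq_pred_iff (t : Fin r) :
    ((finRotate r).symm t : ℕ) = r - 1 ↔ (t : ℕ) = 0 := by
  obtain _ | r := r
  · exact t.elim0
  calc (((finRotate (r + 1)).symm t : Fin _) : ℕ) = r
      ↔ (finRotate (r + 1)).symm t = Fin.last r := (Fin.ext_iff (b := Fin.last r)).symm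
    _ ↔ t = 0 := by rw [Equiv.symm_apply_eq, finRotate_last]
    _ ↔ (t : ℕ) = 0 := Fin.ext_iff

end Rotation

/-! ### The standard representatives -/

section Representatives

variable {e : ℕ} [NeZero e]

theorem coe_partsList (β : ZMod e → Multiset ℕ) :
    (partsList e β : Multiset (ℕ × ZMod e)) = ∑ k, (β k).map fun r => (r, k) := by
  rw [partsList, ← Multiset.coe_bind, Finset.coe_toList]
  simp only [← Multiset.map_coe, Multiset.coe_toList]
  rfl

theorem sum_map_fst_partsList (β : ZMod e → Multiset ℕ) :
    ((partsList e β).map Prod.fst).sum = ∑ k, (β k).sum := by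
  rw [← Multiset.sum_coe, ← Multiset.map_coe, coe_partsList, ← Multiset.coe_mapAddMonoidHom,
    ← Multiset.coe_sumAddMonoidHom, map_sum, map_sum]
  simp only [Multiset.coe_mapAddMonoidHom, Multiset.coe_sumAddMonoidHom, Multiset.map_map,
    Function.comp_def, Multiset.map_id']

theorem count_partsList (β : ZMod e → Multiset ℕ) (r : ℕ) (k : ZMod e) :
    (partsList e β : Multiset (ℕ × ZMod e)).count (r, k) = (β k).count r := by
  rw [coe_partsList, Multiset.count_sum', Finset.sum_eq_single k]
  · exact Multiset.count_map_eq_count' (fun s => (s, k)) _ (Prod.mk_left_injective k) r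
  · intro k' _ hk'
    refine Multiset.count_eq_zero.2 fun hmem => ?_
    obtain ⟨s, -, hs⟩ := Multiset.mem_map.1 hmem
    exact hk' (Prod.mk.inj hs).2
  · exact fun h => absurd (Finset.mem_univ k) h

theorem mem_partsList {β : ZMod e → Multiset ℕ} {r : ℕ} {k : ZMod e} :
    (r, k) ∈ partsList e β ↔ r ∈ β k := by
  rw [← Multiset.mem_coe, ← Multiset.count_pos, count_partsList, Multiset.count_pos]

/-- The points of the cycles prescribed by `β`: the point `⟨i, t⟩` is the `t`-th point of the
cycle attached to the `i`-th entry of `partsList e β`. -/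
abbrev CyclePoint (β : ZMod e → Multiset ℕ) : Type :=
  Σ i : Fin (partsList e β).length, Fin ((partsList e β).get i).1

theorem card_cyclePoint (β : ZMod e → Multiset ℕ) :
    Fintype.card (CyclePoint β) = ∑ k, (β k).sum := by
  rw [Fintype.card_sigma, ← sum_map_fst_partsList]
  simp only [Fintype.card_fin]
  exact Fin.sum_univ_fun_getElem (partsList e β) Prod.fst

variable {n : ℕ} {β : ZMod e → Multiset ℕ}

/-- The numbering of the points of the cycles used by `wrep e n β b`. -/
noncomputable def cycleChart (hβ : IsEPartition e n β) : CyclePoint β ≃ Fin n :=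
  Fintype.equivFinOfCardEq ((card_cyclePoint β).trans hβ.2)

theorem wrep_right_cycleChart (hβ : IsEPartition e n β) (b : ZMod e) (i t) :
    (wrep e n β b).right (cycleChart hβ ⟨i, t⟩) = cycleChart hβ ⟨i, finRotate _ t⟩ := by
  rw [wrep, dif_pos ((card_cyclePoint β).trans hβ.2)]
  change cycleChart hβ (Equiv.sigmaCongrRight _ ((cycleChart hβ).symm (cycleChart hβ _))) = _
  rw [Equiv.symm_apply_apply]
  rfl

theorem wrep_right_symm_cycleChart (hβ : IsEPartition e n β) (b : ZMod e) (i t) :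
    (wrep e n β b).right.symm (cycleChart hβ ⟨i, t⟩) =
      cycleChart hβ ⟨i, (finRotate _).symm t⟩ := by
  rw [Equiv.symm_apply_eq, wrep_right_cycleChart, Equiv.apply_symm_apply]

theorem wrep_left_cycleChart (hβ : IsEPartition e n β) (b : ZMod e) (x : CyclePoint β) :
    ((wrep e n β b).left (cycleChart hβ x)).toAdd = aexc e (partsList e β) b x := by
  rw [wrep, dif_pos ((card_cyclePoint β).trans hβ.2)]
  change aexc e _ b ((cycleChart hβ).symm (cycleChart hβ x)) = _
  rw [Equiv.symm_apply_apply]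

theorem sum_cycleChart {M : Type*} [AddCommMonoid M] (hβ : IsEPartition e n β) (f : Fin n → M) :
    ∑ x, f x = ∑ i, ∑ t, f (cycleChart hβ ⟨i, t⟩) := by
  rw [← (cycleChart hβ).sum_comp, Fintype.sum_sigma]

theorem fst_get_partsList_pos (hβ : IsEPartition e n β) (i : Fin (partsList e β).length) :
    0 < ((partsList e β).get i).1 :=
  hβ.1 _ _ (mem_partsList.1 (List.get_mem _ i))

theorem wrep_zero_left_cycleChart (hβ : IsEPartition e n β) (i t) :
    ((wrep e n β 0).left (cycleChart hβ ⟨i, t⟩)).toAdd =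
      if (t : ℕ) = 0 then ((partsList e β).get i).2 else 0 := by
  rw [wrep_left_cycleChart]
  simp only [aexc, sub_zero, ite_self, add_zero]

theorem sum_wrep_zero_left_cycleChart (hβ : IsEPartition e n β) (i) :
    ∑ t, ((wrep e n β 0).left (cycleChart hβ ⟨i, t⟩)).toAdd = ((partsList e β).get i).2 := by
  simp only [wrep_zero_left_cycleChart]
  rw [Finset.sum_eq_single ⟨0, fst_get_partsList_pos hβ i⟩
    (fun t _ ht => if_neg fun h => ht (Fin.ext h))
    fun h => absurd (Finset.mem_univ _) h, if_pos rfl]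

/-- The last point of the exceptional cycle, where `wrep e n β b` carries the color `b`. -/
noncomputable def lastExceptional (hβ : IsEPartition e n β) (h : 0 < (partsList e β).length) :
    CyclePoint β :=
  ⟨⟨0, h⟩, ⟨_, Nat.sub_lt (fst_get_partsList_pos hβ ⟨0, h⟩) one_pos⟩⟩

theorem eq_lastExceptional_iff (hβ : IsEPartition e n β) (h : 0 < (partsList e β).length) (i t) :
    (⟨i, t⟩ : CyclePoint β) = lastExceptional hβ h ↔
      (i : ℕ) = 0 ∧ (t : ℕ) = ((partsList e β).get i).1 - 1 := by
  constructor
  · intro heq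
    obtain ⟨rfl, ht⟩ := Sigma.mk.inj_iff.1 heq
    rw [eq_of_heq ht]
    exact ⟨rfl, rfl⟩
  · obtain ⟨i, hi⟩ := i
    rintro ⟨rfl, ht⟩
    exact congrArg _ (Fin.ext ht)

theorem exists_wrep_eq_conj [NeZero n] (hβ : IsEPartition e n β) :
    ∃ x : Fin n, ∀ b, wrep e n β b =
      SemidirectProduct.inl (Pi.mulSingle x (Multiplicative.ofAdd b)) * wrep e n β 0 *
        (SemidirectProduct.inl (Pi.mulSingle x (Multiplicative.ofAdd b)))⁻¹ := by
  refine ⟨cycleChart hβ (lastExceptional hβ ((cycleChart hβ).symm 0).1.pos), fun b => ?_⟩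
  rw [Wt_inl_mul_mul_inl_inv]
  refine SemidirectProduct.ext (funext fun x => ?_) (Equiv.ext fun x => ?_) <;>
    obtain ⟨⟨i, t⟩, rfl⟩ := (cycleChart hβ).surjective x
  · refine Multiplicative.toAdd.injective ?_
    simp only [Pi.mul_apply, Pi.inv_apply, Function.comp_apply, toAdd_mul, toAdd_inv,
      Pi.mulSingle_apply, wrep_right_symm_cycleChart, (cycleChart hβ).injective.eq_iff,
      eq_lastExceptional_iff, wrep_left_cycleChart, finRotate_symm_val_eq_pred_iff, aexc,
      apply_ite Multiplicative.toAdd, toAdd_ofAdd, toAdd_one]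
    by_cases hi : (i : ℕ) = 0
    · simp only [hi, true_and, if_true]
      split_ifs <;> ring
    · simp only [hi, false_and, if_false, zero_add, neg_zero, add_zero]
  · simp only [wrep_right_cycleChart]

end Representatives

/-! ### Conjugacy of the representatives under `G(e,p,n)` -/

section Centralizer

variable {e n : ℕ} [NeZero e] {p : ℕ} {β : ZMod e → Multiset ℕ}

theorem hOrd_dvd_iff (p j m : ℕ) : hOrd p j ∣ m ↔ (m : ZMod p) * (j : ZMod p) = 0 := by
  rw [hOrd, addOrderOf_dvd_iff_nsmul_eq_zero, nsmul_eq_mul]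

theorem cond261_iff (hp : p ∣ e) (j : ℕ) : Cond261 e p j β ↔
    ∀ i, (((partsList e β).get i).1 : ZMod p) * j = 0 ∧
      ZMod.castHom hp (ZMod p) ((partsList e β).get i).2 * j = 0 := by
  have hOrd_dvd_val_iff (k : ZMod e) :
      hOrd p j ∣ k.val ↔ ZMod.castHom hp (ZMod p) k * j = 0 := by
    rw [hOrd_dvd_iff, ZMod.natCast_val, ZMod.castHom_apply]
  simp only [Cond261, hOrd_dvd_iff, ← hOrd_dvd_val_iff]
  constructor
  · intro h i
    have mem := mem_partsList.1 (List.get_mem (partsList e β) i)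
    exact ⟨h.1 _ _ mem, h.2 _ fun h0 => Multiset.notMem_zero _ (h0 ▸ mem)⟩
  · intro h
    have of_mem {r : ℕ} {k : ZMod e} (hr : r ∈ β k) :
        (r : ZMod p) * j = 0 ∧ (k.val : ZMod p) * j = 0 := by
      obtain ⟨i, hi⟩ := List.mem_iff_get.1 (mem_partsList.2 hr)
      simpa only [hi] using h i
    refine ⟨fun k r hr => (of_mem hr).1, fun k hk => ?_⟩
    obtain ⟨r, hr⟩ := Multiset.exists_mem_of_ne_zero hk
    exact (of_mem hr).2

theorem symm_wrep_right_fst (hβ : IsEPartition e n β) (b : ZMod e) (x : Fin n) :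
    ((cycleChart hβ).symm ((wrep e n β b).right x)).1 = ((cycleChart hβ).symm x).1 := by
  obtain ⟨⟨i, t⟩, rfl⟩ := (cycleChart hβ).surjective x
  rw [wrep_right_cycleChart, Equiv.symm_apply_apply, Equiv.symm_apply_apply]

theorem length_mem_map_centralizer (hp : p ∣ e) (hβ : IsEPartition e n β) (i) :
    Multiplicative.ofAdd (((partsList e β).get i).1 : ZMod p) ∈
      (Subgroup.centralizer {wrep e n β 0}).map (wsumHom e p n hp) := by
  let f : NC e n := fun x =>
    Multiplicative.ofAdd (if ((cycleChart hβ).symm x).1 = i then (1 : ZMod e) else 0)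
  have hf : Commute (SemidirectProduct.inl f) (wrep e n β 0) :=
    commute_inl fun x => by simp only [f, symm_wrep_right_fst]
  refine ⟨_, Subgroup.mem_centralizer_singleton_iff.2 hf.eq, Multiplicative.toAdd.injective ?_⟩
  rw [toAdd_wsumHom, sum_cycleChart hβ, Finset.sum_eq_single i]
  · simp only [SemidirectProduct.left_inl, f, Equiv.symm_apply_apply, if_true, toAdd_ofAdd,
      map_one, Finset.sum_const, Finset.card_univ, Fintype.card_fin, nsmul_eq_mul, mul_one]
  · intro i' _ hi'
    simp only [SemidirectProduct.left_inl, f, Equiv.symm_apply_apply, if_neg hi', toAdd_ofAdd,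
      map_zero, Finset.sum_const_zero]
  · exact fun h => absurd (Finset.mem_univ i) h

theorem color_mem_map_centralizer (hp : p ∣ e) (hβ : IsEPartition e n β) (i) :
    Multiplicative.ofAdd (ZMod.castHom hp (ZMod p) ((partsList e β).get i).2) ∈
      (Subgroup.centralizer {wrep e n β 0}).map (wsumHom e p n hp) := by
  let P : Fin n → Prop := fun x => ((cycleChart hβ).symm x).1 = i
  have hP (x) : P ((wrep e n β 0).right x) ↔ P x := by simp only [P, symm_wrep_right_fst]
  refine ⟨_, Subgroup.mem_centralizer_singleton_iff.2 (commute_restrictTo _ P hP).eq,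
    Multiplicative.toAdd.injective ?_⟩
  rw [toAdd_wsumHom, sum_cycleChart hβ, Finset.sum_eq_single i]
  · simp only [restrictTo, P, Equiv.symm_apply_apply, if_true, ← map_sum,
      sum_wrep_zero_left_cycleChart, toAdd_ofAdd]
  · intro i' _ hi'
    simp only [restrictTo, P, Equiv.symm_apply_apply, if_neg hi', toAdd_one, map_zero,
      Finset.sum_const_zero]
  · exact fun h => absurd (Finset.mem_univ i) h

theorem wsumHom_mul_eq_zero_of_commute (hp : p ∣ e) (hβ : IsEPartition e n β) {j : ℕ}
    (hj : Cond261 e p j β) {v : Wt e n} (hv : Commute v (wrep e n β 0)) :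
    (wsumHom e p n hp v).toAdd * j = 0 := by
  let f : ZMod e →+ ZMod p :=
    (AddMonoidHom.mulRight (j : ZMod p)).comp (ZMod.castHom hp (ZMod p)).toAddMonoidHom
  have hf (x : Fin n) : f ((wrep e n β 0).left x).toAdd = 0 := by
    obtain ⟨⟨i, t⟩, rfl⟩ := (cycleChart hβ).surjective x
    rw [wrep_zero_left_cycleChart, apply_ite f, map_zero, ite_eq_right_iff]
    exact fun _ => ((cond261_iff hp j).1 hj i).2
  have sum_cycle (i) : ∑ t, f (v.left (cycleChart hβ ⟨i, t⟩)).toAdd = 0 := by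
    have invariant := eq_of_finRotate_invariant
      (f := fun t => f (v.left (cycleChart hβ ⟨i, t⟩)).toAdd) fun t => by
        rw [← wrep_right_cycleChart hβ 0, map_left_right_eq_of_commute f hv hf]
    simp only [fun t => invariant t ⟨0, fst_get_partsList_pos hβ i⟩]
    rw [Finset.sum_const, Finset.card_univ, Fintype.card_fin, nsmul_eq_mul]
    change _ * (_ * (j : ZMod p)) = 0
    rw [mul_left_comm, ((cond261_iff hp j).1 hj i).1, mul_zero]
  rw [toAdd_wsumHom, Finset.sum_mul, sum_cycleChart hβ]
  exact Finset.sum_eq_zero fun i _ => sum_cycle i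

theorem cond261_iff_forall_mem_map_centralizer (hp : p ∣ e) (hβ : IsEPartition e n β) (j : ℕ) :
    Cond261 e p j β ↔ ∀ y ∈ (Subgroup.centralizer {wrep e n β 0}).map (wsumHom e p n hp),
      y.toAdd * (j : ZMod p) = 0 := by
  constructor
  · rintro hj _ ⟨v, hv, rfl⟩
    exact wsumHom_mul_eq_zero_of_commute hp hβ hj (Subgroup.mem_centralizer_singleton_iff.1 hv)
  · exact fun h => (cond261_iff hp j).2 fun i =>
      ⟨h _ (length_mem_map_centralizer hp hβ i), h _ (color_mem_map_centralizer hp hβ i)⟩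

theorem isConjW_wrep_iff_fjInv_eq [NeZero n] (hp : p ∣ e) (hβ : IsEPartition e n β)
    (b b' : ZMod e) :
    IsConjW e p n hp (wrep e n β b) (wrep e n β b') ↔
      ∀ j < p, fjInv e p hp β b j = fjInv e p hp β b' j := by
  have : NeZero p := ⟨fun h => NeZero.ne e (Nat.eq_zero_of_zero_dvd (h ▸ hp))⟩
  obtain ⟨x, hx⟩ := exists_wrep_eq_conj hβ
  rw [IsConjW, hx b, hx b', Wgrp, exists_ker_conj_iff, mem_subgroup_zmod_iff]
  simp only [← cond261_iff_forall_mem_map_centralizer hp hβ, wsumHom_inl_mulSingle,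
    toAdd_div, toAdd_ofAdd, sub_mul, sub_eq_zero]
  refine forall₂_congr fun j _ => ?_
  by_cases hj : Cond261 e p j β
  · simp only [fjInv, hj, true_imp_iff, if_true, eq_comm]
  · simp only [fjInv, hj, false_imp_iff, if_false]

end Centralizer

/-! ### The `e`-partition of a representative -/

section CycleType

variable {e n : ℕ} [NeZero e] {β β' : ZMod e → Multiset ℕ}

theorem cycleDatum_wrep_zero (hβ : IsEPartition e n β) (i t) :
    cycleDatum (wrep e n β 0) (cycleChart hβ ⟨i, t⟩) = (partsList e β).get i := by
  have semiconj : Function.Semiconj (fun s => cycleChart hβ ⟨i, s⟩)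
      (finRotate ((partsList e β).get i).1) (wrep e n β 0).right :=
    fun s => (wrep_right_cycleChart hβ 0 i s).symm
  have injective : Function.Injective fun s => cycleChart hβ ⟨i, s⟩ :=
    (cycleChart hβ).injective.comp sigma_mk_injective
  have period_eq : Function.minimalPeriod (wrep e n β 0).right (cycleChart hβ ⟨i, t⟩) =
      ((partsList e β).get i).1 :=
    (minimalPeriod_eq_of_semiconj injective semiconj t).trans (minimalPeriod_finRotate t)
  have iterate_period : (wrep e n β 0).right^[((partsList e β).get i).1] (cycleChart hβ ⟨i, t⟩) =
      cycleChart hβ ⟨i, t⟩ := by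
    rw [← period_eq, Function.iterate_minimalPeriod]
  refine Prod.ext period_eq ?_
  calc (cycleDatum (wrep e n β 0) (cycleChart hβ ⟨i, t⟩)).2
      = (((wrep e n β 0) ^ ((partsList e β).get i).1).left
          ((wrep e n β 0).right^[((partsList e β).get i).1] (cycleChart hβ ⟨i, t⟩))).toAdd := by
        rw [iterate_period, cycleDatum, period_eq]
    _ = ∑ m ∈ Finset.range ((partsList e β).get i).1,
          ((wrep e n β 0).left
            (cycleChart hβ ⟨i, (finRotate _)^[m] (finRotate _ t)⟩)).toAdd := by
        rw [pow_left_iterate, toAdd_prod]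
        refine Finset.sum_congr rfl fun m _ => ?_
        rw [← semiconj.iterate_right (m + 1) t, Function.iterate_succ_apply]
    _ = ((partsList e β).get i).2 := by
        rw [sum_finRotate_iterate
            (fun s => ((wrep e n β 0).left (cycleChart hβ ⟨i, s⟩)).toAdd),
          sum_wrep_zero_left_cycleChart]

theorem sum_cycleDatum_wrep_zero {M : Type*} [AddCommMonoid M] (hβ : IsEPartition e n β)
    (f : ℕ × ZMod e → M) :
    ∑ x, f (cycleDatum (wrep e n β 0) x) = ((partsList e β).map fun a => a.1 • f a).sum := by
  rw [sum_cycleChart hβ, ← Fin.sum_univ_fun_getElem]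
  simp only [cycleDatum_wrep_zero, Finset.sum_const, Finset.card_univ, Fintype.card_fin,
    List.get_eq_getElem]

theorem sum_ite_cycleDatum_wrep_zero (hβ : IsEPartition e n β) (r : ℕ) (k : ZMod e) :
    ∑ x, (if cycleDatum (wrep e n β 0) x = (r, k) then 1 else 0) = ((β k).count r * r : ℤ) := by
  rw [sum_cycleDatum_wrep_zero hβ fun a => if a = (r, k) then (1 : ℤ) else 0]
  simp only [smul_ite, nsmul_eq_mul, mul_one, mul_zero]
  rw [List.sum_map_ite_eq, List.sum_map_zero, add_zero, sub_zero, nsmul_eq_mul,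
    ← Multiset.coe_count, count_partsList]

theorem isConj_wrep_zero [NeZero n] (hβ : IsEPartition e n β) (b : ZMod e) :
    IsConj (wrep e n β 0) (wrep e n β b) := by
  obtain ⟨x, hx⟩ := exists_wrep_eq_conj hβ
  exact isConj_iff.2 ⟨_, (hx b).symm⟩

theorem eq_of_isConj_wrep [NeZero n] (hβ : IsEPartition e n β) (hβ' : IsEPartition e n β')
    {b b' : ZMod e} (h : IsConj (wrep e n β b) (wrep e n β' b')) : β = β' := by
  obtain ⟨u, hu⟩ :=
    isConj_iff.1 (((isConj_wrep_zero hβ b).trans h).trans (isConj_wrep_zero hβ' b').symm)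
  funext k
  refine Multiset.ext.2 fun r => ?_
  obtain rfl | hr := r.eq_zero_or_pos
  · have count_zero {α : ZMod e → Multiset ℕ} (hα : IsEPartition e n α) : (α k).count 0 = 0 :=
      Multiset.count_eq_zero.2 fun h0 => (hα.1 k 0 h0).false
    rw [count_zero hβ, count_zero hβ']
  · have count_mul_eq : ((β k).count r * r : ℤ) = (β' k).count r * r := by
      rw [← sum_ite_cycleDatum_wrep_zero hβ, ← sum_ite_cycleDatum_wrep_zero hβ', ← hu,
        ← Equiv.sum_comp u.right fun x =>
          if cycleDatum (u * wrep e n β 0 * u⁻¹) x = (r, k) then (1 : ℤ) else 0]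
      simp only [cycleDatum_conj]
    exact Nat.eq_of_mul_eq_mul_right hr (by exact_mod_cast count_mul_eq)

end CycleType

/-! ### The tuple `p_{β,b}` -/

section Tuple

variable {e p d n : ℕ}

theorem hOrd_pos [NeZero p] (j : ℕ) : 0 < hOrd p j :=
  addOrderOf_pos _

theorem hOrd_dvd [NeZero p] (j : ℕ) : hOrd p j ∣ p := by
  rw [hOrd_dvd_iff, ZMod.natCast_self, zero_mul]

theorem Esys_pos [NeZero p] [NeZero d] (j : ℕ) : 0 < Esys p d j :=
  Nat.mul_pos (Nat.div_pos (Nat.le_of_dvd (NeZero.pos p) (hOrd_dvd j)) (hOrd_pos j)) (NeZero.pos d)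

theorem Esys_dvd_mul_self [NeZero p] (j : ℕ) : Esys p d j ∣ p * d :=
  Nat.mul_dvd_mul_right (Nat.div_dvd_of_dvd (hOrd_dvd j)) d

theorem Esys_dvd_mul [NeZero p] (j : ℕ) : Esys p d j ∣ j * d := by
  refine Nat.mul_dvd_mul_right (Nat.dvd_of_mul_dvd_mul_left (hOrd_pos (p := p) j) ?_) d
  rw [Nat.mul_div_cancel' (hOrd_dvd (p := p) j), ← ZMod.natCast_eq_zero_iff, Nat.cast_mul,
    ← hOrd_dvd_iff]

variable [NeZero e] {ζ : ℂ} {m : ZMod e → ℕ} {β β' : ZMod e → Multiset ℕ}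

theorem zmpow_injective (hζ : IsPrimitiveRoot ζ e) : Function.Injective (zmpow e ζ) :=
  fun c c' h => ZMod.val_injective e (hζ.pow_inj c.val_lt c'.val_lt h)

theorem mul_natCast_eq_iff_castHom_mul_eq (he : e = p * d) (hp : p ∣ e) (a a' : ZMod e) (j : ℕ) :
    a * ((j * d : ℕ) : ZMod e) = a' * ((j * d : ℕ) : ZMod e) ↔
      ZMod.castHom hp (ZMod p) a * j = ZMod.castHom hp (ZMod p) a' * j := by
  have hd : 0 < d := Nat.pos_of_ne_zero fun h => NeZero.ne e (by rw [he, h, mul_zero])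
  rw [← sub_eq_zero, ← sub_mul, ← sub_eq_zero (a := ZMod.castHom hp (ZMod p) a * j), ← sub_mul,
    ← map_sub, ← ZMod.natCast_zmod_val (a - a'), map_natCast, ← Nat.cast_mul, ← Nat.cast_mul,
    ZMod.natCast_eq_zero_iff, ZMod.natCast_eq_zero_iff, ← mul_assoc]
  conv_lhs => lhs; rw [he]
  exact Nat.mul_dvd_mul_iff_right hd

/-- The assignment sending `x_0^{(k)}` to `1` when `E ∣ k` and every other variable to `0`. For
`E = Esys p d j` it makes `X_0^{(0)}` the only nonzero variable of the system `𝒳_j`. -/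
noncomputable def dvdAssignment (e : ℕ) [NeZero e] (m : ZMod e → ℕ) (E : ℕ) : BIdx e m → ℂ :=
  fun x => if (x.2 : ℕ) = 0 ∧ E ∣ x.1.val then 1 else 0

theorem xval_dvdAssignment (hm : ∀ k, 0 < m k) (E : ℕ) (k : ZMod e) (i : ℕ) :
    xval e m (dvdAssignment e m E) k i = if i = 0 ∧ E ∣ k.val then 1 else 0 := by
  by_cases hi : i < m k
  · rw [xval, dif_pos hi, dvdAssignment]
  · rw [xval, dif_neg hi, if_neg]
    rintro ⟨rfl, -⟩
    exact hi (hm k)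

theorem Xvar_dvdAssignment [NeZero p] (he : e = p * d) (hm : ∀ k, 0 < m k) (j k i : ℕ) :
    Xvar e p d m (dvdAssignment e m (Esys p d j)) j k i =
      if i = 0 ∧ Esys p d j ∣ k then 1 else 0 := by
  have dvd_val_iff (s : ℕ) :
      Esys p d j ∣ ((k + s * j * d : ℕ) : ZMod e).val ↔ Esys p d j ∣ k := by
    rw [ZMod.val_natCast, Nat.dvd_mod_iff (he ▸ Esys_dvd_mul_self j), mul_assoc]
    exact Nat.dvd_add_left ((Esys_dvd_mul j).mul_left s)
  simp only [Xvar, xval_dvdAssignment hm, dvd_val_iff, Finset.prod_const, Finset.card_range,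
    ite_pow, one_pow, zero_pow (hOrd_pos j).ne']

theorem pGenSys_dvdAssignment [NeZero p] (he : e = p * d) (hm : ∀ k, 0 < m k) (u : ℂ)
    (j i r : ℕ) : pGenSys u (Esys p d j) (mmX e m)
      (vvX e p d m (dvdAssignment e m (Esys p d j)) j) i r = 1 := by
  have : NeZero d := ⟨fun h => NeZero.ne e (by rw [he, h, mul_zero])⟩
  obtain rfl | hr := eq_or_ne r 0
  · rw [pGenSys, if_pos rfl]
  rw [pGenSys, if_neg hr]
  simp only [vvX, Xvar_dvdAssignment he hm, ite_pow, one_pow, zero_pow hr]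
  rw [Finset.sum_eq_single 0, Finset.sum_eq_single 0]
  · simp only [dvd_zero, and_self, if_true, mul_zero, pow_zero, mul_one]
  · exact fun s _ hs => if_neg fun h => hs h.1
  · exact fun h => absurd (Finset.mem_range.2 (hm _)) h
  · intro k hk hk0
    have not_dvd : ¬ Esys p d j ∣ k :=
      Nat.not_dvd_of_pos_of_lt (Nat.pos_of_ne_zero hk0) (Finset.mem_range.1 hk)
    simp only [not_dvd, and_false, if_false, Finset.sum_const_zero, mul_zero]
  · exact fun h => absurd (Finset.mem_range.2 (Esys_pos j)) h

theorem pBracket_dvdAssignment [NeZero p] (he : e = p * d) (hm : ∀ k, 0 < m k) (j : ℕ)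
    (β : ZMod e → Multiset ℕ) :
    pBracket e p d ζ m (dvdAssignment e m (Esys p d j)) j β = 1 := by
  simp only [pBracket, pAlphaSys, pGenSys_dvdAssignment he hm, Multiset.map_const',
    Multiset.prod_replicate, one_pow, Finset.prod_const_one]

theorem forall_pTuple_eq_iff_fjInv_eq [NeZero p] (he : e = p * d) (hp : p ∣ e)
    (hζ : IsPrimitiveRoot ζ e) (hm : ∀ k, 0 < m k) (β : ZMod e → Multiset ℕ) (b b' : ZMod e)
    (j : ℕ) :
    (∀ xv : BIdx e m → ℂ, pTuple e p d ζ m xv β b j = pTuple e p d ζ m xv β b' j) ↔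
      fjInv e p hp β b j = fjInv e p hp β b' j := by
  by_cases hj : Cond261 e p j β
  swap
  · simp only [pTuple, fjInv, if_neg hj, implies_true]
  simp only [pTuple, fjInv, if_pos hj]
  rw [← mul_natCast_eq_iff_castHom_mul_eq he hp]
  constructor
  · intro h
    have hxv := h (dvdAssignment e m (Esys p d j))
    have scalar_ne_zero : (hOrd p j : ℂ) ^ lenBracket e p d j β ≠ 0 :=
      pow_ne_zero _ (Nat.cast_ne_zero.2 (hOrd_pos j).ne')
    rw [pBracket_dvdAssignment he hm, mul_one, mul_one] at hxv
    simpa only [neg_inj, add_mul, add_right_inj] using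
      zmpow_injective hζ (mul_left_cancel₀ scalar_ne_zero hxv)
  · intro h xv
    rw [add_mul, add_mul, h]

theorem pTuple_zero (he : e = p * d) (xv : BIdx e m → ℂ) (β : ZMod e → Multiset ℕ) (b : ZMod e) :
    pTuple e p d ζ m xv β b 0 = ∏ k : ZMod e, ((β k).map fun r =>
      pGenSys ζ e (mmX e m) (fun l : ℕ => xval e m xv l) k.val r).prod := by
  have hOrd_zero : hOrd p 0 = 1 := by rw [hOrd, Nat.cast_zero, addOrderOf_zero]
  have Esys_zero : Esys p d 0 = e := by rw [Esys, hOrd_zero, Nat.div_one, he]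
  have cond : Cond261 e p 0 β := by
    rw [Cond261, hOrd_zero]
    exact ⟨fun _ _ _ => one_dvd _, fun _ _ => one_dvd _⟩
  have vvX_zero : vvX e p d m xv 0 = fun l : ℕ => xval e m xv l := by
    funext k i
    simp only [vvX, Xvar, hOrd_zero, Finset.prod_range_one, zero_mul, add_zero]
  rw [pTuple, if_pos cond, pBracket, pAlphaSys, hOrd_zero, Esys_zero, vvX_zero, zero_mul,
    Nat.cast_zero, mul_zero, neg_zero, zmpow, ZMod.val_zero, Nat.cast_one, one_pow, pow_zero,
    one_mul, one_mul, pow_one]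
  refine Finset.prod_nbij' (fun k => (k : ZMod e)) ZMod.val (fun _ _ => Finset.mem_univ _)
    (fun k _ => Finset.mem_range.2 k.val_lt)
    (fun k hk => ZMod.val_cast_of_lt (Finset.mem_range.1 hk))
    (fun k _ => ZMod.natCast_zmod_val k) fun k hk => ?_
  simp only [bracketF, Esys_zero, if_pos (Finset.mem_range.1 hk), hOrd_zero, one_mul, Nat.div_one,
    Multiset.map_id', ZMod.val_cast_of_lt (Finset.mem_range.1 hk)]

theorem exists_sum_pow_mul_eq {K : Type*} [Field K] {ζ : K} (hζ : IsPrimitiveRoot ζ e)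
    (c : ZMod e → K) : ∃ y : ZMod e → K, ∀ k : ZMod e,
      ∑ l ∈ Finset.range e, ζ ^ (k.val * l) * y l = c k := by
  have unit : IsUnit (Matrix.vandermonde fun k : Fin e => ζ ^ (k : ℕ)) := by
    rw [Matrix.isUnit_iff_isUnit_det, isUnit_iff_ne_zero, Matrix.det_vandermonde_ne_zero_iff]
    exact fun a b h => Fin.ext (hζ.pow_inj a.2 b.2 h)
  obtain ⟨y, hy⟩ := Matrix.mulVec_surjective_iff_isUnit.2 unit fun k => c (k : ℕ)
  refine ⟨fun l => y ⟨l.val, l.val_lt⟩, fun k => ?_⟩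
  have hk := congrFun hy ⟨k.val, k.val_lt⟩
  rw [ZMod.natCast_zmod_val] at hk
  rw [← hk, Finset.sum_range]
  simp only [Matrix.mulVec, dotProduct, Matrix.vandermonde_apply, ZMod.val_cast_of_lt (Fin.is_lt _),
    pow_mul]

theorem exists_sum_xval_pow_eq (hmn : ∀ k, n ≤ m k) (c : ZMod e → ℕ → ℂ) :
    ∃ xv : BIdx e m → ℂ, ∀ k r, 0 < r → r ≤ n →
      ∑ i ∈ Finset.range (m k), xval e m xv k i ^ r = c k r := by
  choose x hx using fun k => exists_sum_pow_eq n (c k)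
  refine ⟨fun z => if h : (z.2 : ℕ) < n then x z.1 ⟨z.2, h⟩ else 0, fun k r hr hrn => ?_⟩
  rw [← hx k r hr hrn, ← Finset.sum_subset (Finset.range_subset_range.2 (hmn k)), Finset.sum_range]
  · refine Finset.sum_congr rfl fun i _ => ?_
    rw [xval, dif_pos (i.2.trans_le (hmn k)), dif_pos i.2]
  · intro i hi hin
    rw [xval, dif_pos (Finset.mem_range.1 hi), dif_neg (mt Finset.mem_range.2 hin),
      zero_pow hr.ne']

theorem exists_pGenSys_eq (hζ : IsPrimitiveRoot ζ e) (hmn : ∀ k, n ≤ m k) (c : ZMod e → ℕ → ℂ) :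
    ∃ xv : BIdx e m → ℂ, ∀ (k : ZMod e) (r), 0 < r → r ≤ n →
      pGenSys ζ e (mmX e m) (fun l : ℕ => xval e m xv l) k.val r = c k r := by
  choose y hy using fun r => exists_sum_pow_mul_eq hζ fun k => c k r
  obtain ⟨xv, hxv⟩ := exists_sum_xval_pow_eq hmn fun l r => y r l
  refine ⟨xv, fun k r hr hrn => ?_⟩
  simp only [pGenSys, if_neg hr.ne', mmX, hxv _ r hr hrn, hy]

theorem le_of_mem_isEPartition (hβ : IsEPartition e n β) {k : ZMod e} {r : ℕ} (hr : r ∈ β k) :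
    r ≤ n := by
  rw [← hβ.2]
  exact (Multiset.le_sum_of_mem hr).trans
    (Finset.single_le_sum (f := fun k => (β k).sum) (fun _ _ => Nat.zero_le _) (Finset.mem_univ k))

theorem exists_pTuple_zero_eq_two_pow_count (he : e = p * d) (hζ : IsPrimitiveRoot ζ e)
    (hmn : ∀ k, n ≤ m k) (k : ZMod e) (r : ℕ) :
    ∃ xv : BIdx e m → ℂ, ∀ β b, IsEPartition e n β →
      pTuple e p d ζ m xv β b 0 = 2 ^ (β k).count r := by
  obtain ⟨xv, hxv⟩ := exists_pGenSys_eq hζ hmn fun k' r' => if k' = k ∧ r' = r then 2 else 1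
  refine ⟨xv, fun β b hβ => ?_⟩
  have map_eq (k' : ZMod e) : ((β k').map fun r' =>
      pGenSys ζ e (mmX e m) (fun l : ℕ => xval e m xv l) k'.val r') =
        (β k').map fun r' => if k' = k ∧ r' = r then 2 else 1 :=
    Multiset.map_congr rfl fun r' hr' => hxv k' r' (hβ.1 _ _ hr') (le_of_mem_isEPartition hβ hr')
  simp only [pTuple_zero he, map_eq]
  rw [Fintype.prod_eq_single k, Multiset.prod_map_eq_pow_single r]
  · simp only [and_self, if_true]
  · exact fun r' hr' _ => if_neg fun h => hr' h.2
  · intro k' hk'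
    simp only [hk', false_and, if_false, Multiset.map_const', Multiset.prod_replicate, one_pow]

theorem eq_of_pTuple_zero_eq (he : e = p * d) (hζ : IsPrimitiveRoot ζ e) (hmn : ∀ k, n ≤ m k)
    (hβ : IsEPartition e n β) (hβ' : IsEPartition e n β') {b b' : ZMod e}
    (h : ∀ xv : BIdx e m → ℂ, pTuple e p d ζ m xv β b 0 = pTuple e p d ζ m xv β' b' 0) :
    β = β' := by
  funext k
  refine Multiset.ext.2 fun r => ?_
  obtain ⟨xv, hxv⟩ := exists_pTuple_zero_eq_two_pow_count (p := p) (d := d) he hζ hmn k r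
  have two_pow_eq := h xv
  rw [hxv β b hβ, hxv β' b' hβ'] at two_pow_eq
  exact Nat.pow_right_injective le_rfl (by exact_mod_cast two_pow_eq)

end Tuple

/-! ### Conjugacy under `G(e,p,n)` -/

section Conjugacy

variable {e p n : ℕ} {hp : p ∣ e} {w w' w₀ w₀' : Wt e n}

theorem IsConjW.isConj (h : IsConjW e p n hp w w') : IsConj w w' :=
  isConj_iff.2 (h.imp fun _ hu => hu.2)

theorem IsConjW.symm (h : IsConjW e p n hp w w') : IsConjW e p n hp w' w := by
  obtain ⟨u, hu, rfl⟩ := h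
  exact ⟨u⁻¹, inv_mem hu, by group⟩

theorem IsConjW.trans (h : IsConjW e p n hp w w₀) (h₀ : IsConjW e p n hp w₀ w') :
    IsConjW e p n hp w w' := by
  obtain ⟨u, hu, rfl⟩ := h
  obtain ⟨v, hv, rfl⟩ := h₀
  exact ⟨v * u, mul_mem hv hu, by group⟩

theorem IsConjW.congr (h : IsConjW e p n hp w₀ w) (h' : IsConjW e p n hp w₀' w') :
    IsConjW e p n hp w w' ↔ IsConjW e p n hp w₀ w₀' :=
  ⟨fun hw => (h.trans hw).trans h'.symm, fun hw => (h.symm.trans hw).trans h'⟩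

end Conjugacy

theorem isConjW_wrep_iff_pTuple_eq {e p d n : ℕ} [NeZero e] [NeZero n] (hp : p ∣ e)
    (hd : d = e / p) {ζ : ℂ} (hζ : IsPrimitiveRoot ζ e) {m : ZMod e → ℕ} (hmn : ∀ k, n ≤ m k)
    {β β' : ZMod e → Multiset ℕ} (hβ : IsEPartition e n β) (hβ' : IsEPartition e n β')
    (b b' : ZMod e) :
    IsConjW e p n hp (wrep e n β b) (wrep e n β' b') ↔
      ∀ j < p, ∀ xv : BIdx e m → ℂ,
        pTuple e p d ζ m xv β b j = pTuple e p d ζ m xv β' b' j := by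
  have : NeZero p := ⟨fun h => NeZero.ne e (Nat.eq_zero_of_zero_dvd (h ▸ hp))⟩
  have he : e = p * d := by rw [hd, Nat.mul_div_cancel' hp]
  have hm (k : ZMod e) : 0 < m k := (NeZero.pos n).trans_le (hmn k)
  have iff_of_eq : IsConjW e p n hp (wrep e n β b) (wrep e n β b') ↔
      ∀ j < p, ∀ xv : BIdx e m → ℂ, pTuple e p d ζ m xv β b j = pTuple e p d ζ m xv β b' j := by
    simp only [isConjW_wrep_iff_fjInv_eq hp hβ, forall_pTuple_eq_iff_fjInv_eq he hp hζ hm]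
  constructor <;> intro h
  · obtain rfl := eq_of_isConj_wrep hβ hβ' h.isConj
    exact iff_of_eq.1 h
  · obtain rfl := eq_of_pTuple_zero_eq he hζ hmn hβ hβ' (h 0 (NeZero.pos p))
    exact iff_of_eq.2 h

theorem statement7_general (e p d n : ℕ) [NeZero e] [NeZero n] (hp : p ∣ e) (hd : d = e / p)
    (ζ : ℂ) (hζ : IsPrimitiveRoot ζ e) (m : ZMod e → ℕ) (hmn : ∀ k, n ≤ m k) :
    (∀ (w w' : Wt e n) (β β' : ZMod e → Multiset ℕ) (b b' : ZMod e),
      IsEPartition e n β → IsEPartition e n β' →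
      IsConjW e p n hp (wrep e n β b) w → IsConjW e p n hp (wrep e n β' b') w' →
      (IsConjW e p n hp w w' ↔
        ∀ j < p, ∀ xv : BIdx e m → ℂ,
          pTuple e p d ζ m xv β b j = pTuple e p d ζ m xv β' b' j))
    ∧
    (∀ (β : ZMod e → Multiset ℕ) (b b' : ZMod e),
      IsEPartition e n β →
      (IsConjW e p n hp (wrep e n β b) (wrep e n β b') ↔
        ∀ j < p, fjInv e p hp β b j = fjInv e p hp β b' j)) :=
  ⟨fun _ _ _ _ b b' hβ hβ' hw hw' =>
    (hw.congr hw').trans (isConjW_wrep_iff_pTuple_eq hp hd hζ hmn hβ hβ' b b'),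
    fun _ b b' hβ => isConjW_wrep_iff_fjInv_eq hp hβ b b'⟩

/-- Proposition 2.13.
(i) For `w, w' ∈ σ^q W` (in the `W`-orbits of `w_β(b)`, `w_{β'}(b')`), `w`
and `w'` are conjugate under `W` iff `𝐩_w(x) = 𝐩_{w'}(x)`.
(ii) For `w = w_β(b)`, `w' = w_β(b')` in `σ^q W` (i.e. `Δ(β) ≡ q mod p`),
they are conjugate under `W` iff `f_j(w) = f_j(w')` for `j = 0,…,p-1`. -/
theorem statement7 (e p d n q : ℕ) [NeZero e] [NeZero n] (hp : p ∣ e) (hd : d = e / p)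
    (hq : q ∣ e) (hqp : Nat.Coprime (e / q) (e / p))
    (ζ : ℂ) (hζ : IsPrimitiveRoot ζ e)
    (m : ZMod e → ℕ) (hmn : ∀ k, n ≤ m k) (hm : ∀ k, m (k + (d : ZMod e)) = m k) :
    (∀ (w w' : Wt e n) (β β' : ZMod e → Multiset ℕ) (b b' : ZMod e),
      IsEPartition e n β → IsEPartition e n β' →
      (Delta e β : ZMod p) = (q : ZMod p) → (Delta e β' : ZMod p) = (q : ZMod p) →
      IsConjW e p n hp (wrep e n β b) w → IsConjW e p n hp (wrep e n β' b') w' →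
      (IsConjW e p n hp w w' ↔
        ∀ j < p, ∀ xv : BIdx e m → ℂ,
          pTuple e p d ζ m xv β b j = pTuple e p d ζ m xv β' b' j))
    ∧
    (∀ (β : ZMod e → Multiset ℕ) (b b' : ZMod e),
      IsEPartition e n β → (Delta e β : ZMod p) = (q : ZMod p) →
      (IsConjW e p n hp (wrep e n β b) (wrep e n β b') ↔
        ∀ j < p, fjInv e p hp β b j = fjInv e p hp β b' j)) :=
  have general := statement7_general e p d n hp hd ζ hζ m hmn
  ⟨fun w w' β β' b b' hβ hβ' _ _ => general.1 w w' β β' b b' hβ hβ',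
    fun β b b' hβ _ => general.2 β b b' hβ⟩

end GreenII
end

section
/- Let Θ_q = Σ_{i=0}^{p−1} ζ^{qid} θ^i acting on ℂ[x] via θ(x_j^{(k)}) = x_j^{(k+d)}. Then: (a) Θ_q(p_β) = p·p_β if Δ(β) ≡ q (mod p) and Θ_q(p_β) = 0 otherwise; (b) for α ∈ 𝒫_{n,e} with c = c_{α,p}, Θ_q(s_α) = (p/c)·Σ_{i=0}^{c−1} ζ^{qid} s_{θ^i(α)} if qc ≡ 0 (mod p), and Θ_q(s_α) = 0 otherwise; the same formula as (b) holds with s replaced by the monomial functions m and by the functions q_{·,±}. -/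
/-!
Common framework for formalizing T. Shoji, "Green functions associated to
complex reflection groups, II" (arXiv:math/0105053).

We model:
* `e`-partitions of `n` as functions `ZMod e → Multiset ℕ`;
* the complex reflection group `W̃ = G(e,1,n)` as the semidirect product
  `(Fin n → Multiplicative (ZMod e)) ⋊ Equiv.Perm (Fin n)`, and
  `W = G(e,p,n)` as the kernel of the mod-`p` sum character;
* the tensor space `V^{⊗n}` concretely via matrices indexed by
  `Fin n → (Σ k : ZMod e, Fin (m k))`;
* symmetric functions in the (finitely many, `m k ≥ n`) variables
  `x_i^{(k)}` in evaluated form, i.e. as functions of an assignment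
  `xv : (Σ k : ZMod e, Fin (m k)) → ℂ`.
-/

open scoped BigOperators

attribute [local instance] Classical.propDecidable

namespace GreenII

/-- an `e`-partition as an `ℕ`-indexed tuple (for the generic families with
`E = e` components). -/
noncomputable def liftE (e : ℕ) [NeZero e] (α : ZMod e → Multiset ℕ) : ℕ → Multiset ℕ :=
  fun k => α ((k : ℕ) : ZMod e)

/-- the original variables `x_i^{(k)}` as a generic system with `e` components. -/
noncomputable def vvE (e : ℕ) [NeZero e] (m : ZMod e → ℕ) (xv : BIdx e m → ℂ) : ℕ → ℕ → ℂ :=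
  fun k i => xval e m xv ((k : ℕ) : ZMod e) i

/-!
For a primitive `p`-th root of unity `ω`, `∑_{i<p} ω^{qi} T^i` acts on a `μ`-eigenvector of `T` as
the geometric sum of `ω^q μ`, and on the orbit sum of a vector permuted by `T` with period `c` as
the geometric sum of `ω^{qc}`; when `T^p = 1` both ratios are `p`-th roots of unity, so the sums
vanish unless the ratio is `1`. With `ω = ζ^d` and `T = θ`, it remains to see how `θ` moves the
symmetric functions: translating the index `k ∈ ℤ/eℤ` of a product over all components shows that
it permutes the Schur, monomial and `q`-functions along with their labels, and that it scales
`p_β` by a power of `ζ^d`.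
-/

section TwistedSum

variable {R M X : Type*} [CommRing R] [AddCommGroup M] [Module R M]

theorem geom_sum_eq_ite_of_pow_eq_one [IsDomain R] {u : R} {N : ℕ} (hu : u ^ N = 1) :
    ∑ i ∈ Finset.range N, u ^ i = if u = 1 then (N : R) else 0 := by
  split_ifs with h
  · simp [h]
  · have hzero : (∑ i ∈ Finset.range N, u ^ i) * (u - 1) = 0 := by
      rw [geom_sum_mul, hu, sub_self]
    exact (mul_eq_zero.mp hzero).resolve_right (sub_ne_zero.mpr h)

theorem sum_range_mul_eq_geom_sum_smul {g : ℕ → M} {c : ℕ} {u : R}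
    (hg : ∀ i, g (i + c) = u • g i) (N : ℕ) :
    ∑ i ∈ Finset.range (c * N), g i =
      (∑ b ∈ Finset.range N, u ^ b) • ∑ a ∈ Finset.range c, g a := by
  have hblock (b a : ℕ) : g (c * b + a) = u ^ b • g a := by
    induction b with
    | zero => simp
    | succ b ih => rw [Nat.mul_succ, add_right_comm, hg, ih, smul_smul, pow_succ']
  induction N with
  | zero => simp
  | succ N ih =>
    simp only [Nat.mul_succ, Finset.sum_range_add, ih, hblock, ← Finset.smul_sum,
      Finset.sum_range_succ _ N, add_smul]

/-- The operator `∑_{i<p} ω^{qi} T^i`: if `T^p = 1` and `ω` is a primitive `p`-th root of unity,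
it is `p` times the projection onto the `ω^{-q}`-eigenspace of `T`. -/
def twistedSum (ω : R) (p q : ℕ) (T : Module.End R M) : Module.End R M :=
  ∑ i ∈ Finset.range p, ω ^ (q * i) • T ^ i

theorem twistedSum_apply (ω : R) (p q : ℕ) (T : Module.End R M) (v : M) :
    twistedSum ω p q T v = ∑ i ∈ Finset.range p, ω ^ (q * i) • T^[i] v := by
  simp [twistedSum, LinearMap.sum_apply, Module.End.pow_apply]

theorem twistedSum_apply_of_apply_eq_smul {ω : R} {p q : ℕ} {T : Module.End R M} {v : M} {μ : R}
    (hv : T v = μ • v) :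
    twistedSum ω p q T v = (∑ i ∈ Finset.range p, (ω ^ q * μ) ^ i) • v := by
  have hiter (i : ℕ) : T^[i] v = μ ^ i • v := by
    induction i with
    | zero => simp
    | succ i ih => rw [Function.iterate_succ_apply', ih, map_smul, hv, smul_smul, pow_succ]
  simp only [twistedSum_apply, hiter, Finset.sum_smul, smul_smul, mul_pow, pow_mul]

theorem twistedSum_apply_of_apply_eq_inv_pow_smul {K V : Type*} [Field K] [AddCommGroup V]
    [Module K V] {ω : K} {p : ℕ} (hω : IsPrimitiveRoot ω p) (q : ℕ) {T : Module.End K V} {v : V}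
    {a : ℕ} (hv : T v = (ω ^ a)⁻¹ • v) :
    twistedSum ω p q T v = if (a : ZMod p) = (q : ZMod p) then (p : K) • v else 0 := by
  obtain rfl | hp := eq_or_ne p 0
  · simp [twistedSum]
  have hratio_pow : (ω ^ q * (ω ^ a)⁻¹) ^ p = 1 := by
    rw [mul_pow, inv_pow, pow_right_comm ω q, pow_right_comm ω a, hω.pow_eq_one, one_pow, one_pow,
      inv_one, one_mul]
  have hratio_eq_one : ω ^ q * (ω ^ a)⁻¹ = 1 ↔ (a : ZMod p) = (q : ZMod p) := by
    rw [ZMod.natCast_eq_natCast_iff, Nat.modEq_iff_dvd, ← hω.zpow_eq_one_iff_dvd,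
      zpow_sub₀ (hω.ne_zero hp), zpow_natCast, zpow_natCast, div_eq_mul_inv]
  rw [twistedSum_apply_of_apply_eq_smul hv, geom_sum_eq_ite_of_pow_eq_one hratio_pow]
  simp only [hratio_eq_one, ite_smul, zero_smul]

theorem twistedSum_apply_of_semiconj [IsDomain R] {ω : R} {p : ℕ} (hω : IsPrimitiveRoot ω p)
    (q : ℕ) {T : Module.End R M} {f : X → M} {g : X → X} (hf : Function.Semiconj f g T) {x : X}
    (hx : Function.IsPeriodicPt g p x) :
    twistedSum ω p q T (f x) =
      if p ∣ q * Function.minimalPeriod g x then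
        ((p / Function.minimalPeriod g x : ℕ) : R) •
          ∑ i ∈ Finset.range (Function.minimalPeriod g x), ω ^ (q * i) • f (g^[i] x)
      else 0 := by
  obtain rfl | hp := eq_or_ne p 0
  · simp [twistedSum]
  have hperiod : g^[Function.minimalPeriod g x] x = x := Function.iterate_minimalPeriod
  obtain ⟨N, hN⟩ := hx.minimalPeriod_dvd
  generalize Function.minimalPeriod g x = c at hperiod hN ⊢
  have hc : 0 < c := Nat.pos_of_ne_zero fun h => hp (by rw [hN, h, zero_mul])
  have hquasi (i : ℕ) :
      ω ^ (q * (i + c)) • f (g^[i + c] x) = ω ^ (q * c) • ω ^ (q * i) • f (g^[i] x) := by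
    rw [Function.iterate_add_apply, hperiod, smul_smul, ← pow_add, mul_add, add_comm]
  have hratio_pow : (ω ^ (q * c)) ^ N = 1 := by
    rw [← pow_mul, mul_assoc, ← hN, mul_comm, pow_mul, hω.pow_eq_one, one_pow]
  calc twistedSum ω p q T (f x)
      = ∑ i ∈ Finset.range (c * N), ω ^ (q * i) • f (g^[i] x) := by
        simp only [twistedSum_apply, ← (hf.iterate_right _).eq, hN]
    _ = (if ω ^ (q * c) = 1 then (N : R) else 0) •
          ∑ i ∈ Finset.range c, ω ^ (q * i) • f (g^[i] x) := by
        rw [sum_range_mul_eq_geom_sum_smul hquasi, geom_sum_eq_ite_of_pow_eq_one hratio_pow]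
    _ = _ := by
        simp only [hω.pow_eq_one_iff_dvd, ite_smul, zero_smul, hN, Nat.mul_div_cancel_left N hc]

end TwistedSum

section CyclicProducts

variable {A : Type*} [CommMonoid A]

@[to_additive]
theorem prod_range_natCast_zmod (e : ℕ) [NeZero e] (G : ZMod e → A) :
    ∏ k ∈ Finset.range e, G (k : ZMod e) = ∏ k : ZMod e, G k := by
  cases e with
  | zero => exact absurd rfl (NeZero.ne 0)
  | succ e =>
    rw [Finset.prod_range]
    exact Fintype.prod_congr _ _ fun k => congrArg G (Fin.cast_val_eq_self k)

@[to_additive]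
theorem prod_range_natCast_zmod_add (e : ℕ) [NeZero e] (G : ZMod e → A) (a : ZMod e) :
    ∏ k ∈ Finset.range e, G ((k : ZMod e) + a) = ∏ k ∈ Finset.range e, G (k : ZMod e) := by
  rw [prod_range_natCast_zmod e fun k => G (k + a), prod_range_natCast_zmod]
  exact Equiv.prod_comp (Equiv.addRight a) G

end CyclicProducts

section ThetaOnPartitions

variable {e d : ℕ} [NeZero e]

theorem theta_apply_add (γ : ZMod e → Multiset ℕ) (k : ZMod e) : theta e d γ (k + d) = γ k := by
  simp [theta]

theorem theta_iterate (i : ℕ) (γ : ZMod e → Multiset ℕ) (k : ZMod e) :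
    (theta e d)^[i] γ k = γ (k - ((i * d : ℕ) : ZMod e)) := by
  induction i generalizing k with
  | zero => simp
  | succ i ih =>
    rw [Function.iterate_succ_apply', theta, ih, add_mul, one_mul, Nat.cast_add, sub_sub, add_comm]

theorem isPeriodicPt_theta {p : ℕ} (hpd : p * d = e) (γ : ZMod e → Multiset ℕ) :
    Function.IsPeriodicPt (theta e d) p γ := by
  funext k
  rw [theta_iterate, hpd, ZMod.natCast_self, sub_zero]

theorem Delta_eq_sum_range (γ : ZMod e → Multiset ℕ) :
    Delta e γ = ∑ k ∈ Finset.range e, k * (liftE e γ k).card := by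
  rw [Delta, ← sum_range_natCast_zmod e fun k => k.val * (γ k).card]
  refine Finset.sum_congr rfl fun k hk => ?_
  rw [ZMod.val_natCast_of_lt (Finset.mem_range.mp hk), liftE]

end ThetaOnPartitions

section ThetaOnFunctions

variable {e d : ℕ} [NeZero e] {m : ZMod e → ℕ} (hm : ∀ k, m (k + (d : ZMod e)) = m k)

/-- The operator `θ` on functions of the variables, `(θF)(x) = F(x ∘ τ)`, which sends the
coordinate function `x_j^{(k)}` to `x_j^{(k+d)}`. -/
def shiftOperator : Module.End ℂ ((BIdx e m → ℂ) → ℂ) :=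
  LinearMap.funLeft ℂ ℂ (· ∘ tauB e d m hm)

theorem shiftOperator_apply (F : (BIdx e m → ℂ) → ℂ) (xv : BIdx e m → ℂ) :
    shiftOperator hm F xv = F (xv ∘ tauB e d m hm) :=
  rfl

theorem shiftOperator_iterate_apply (i : ℕ) (F : (BIdx e m → ℂ) → ℂ) (xv : BIdx e m → ℂ) :
    (shiftOperator hm)^[i] F xv = F (xv ∘ (tauB e d m hm)^[i]) := by
  induction i generalizing xv with
  | zero => rfl
  | succ i ih =>
    rw [Function.iterate_succ_apply', shiftOperator_apply, ih, Function.comp_assoc,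
      ← Function.iterate_succ']

/-- The operator `Θ_q = ∑_{i<p} ζ^{qid} θ^i`. -/
noncomputable def Theta (p q : ℕ) (ζ : ℂ) : Module.End ℂ ((BIdx e m → ℂ) → ℂ) :=
  twistedSum (ζ ^ d) p q (shiftOperator hm)

theorem Theta_apply (p q : ℕ) (ζ : ℂ) (F : (BIdx e m → ℂ) → ℂ) (xv : BIdx e m → ℂ) :
    Theta hm p q ζ F xv =
      ∑ i ∈ Finset.range p, ζ ^ (q * i * d) * F (xv ∘ (tauB e d m hm)^[i]) := by
  simp only [Theta, twistedSum_apply, Finset.sum_apply, Pi.smul_apply, smul_eq_mul,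
    shiftOperator_iterate_apply, ← pow_mul, mul_comm d]

theorem xval_comp_tauB (xv : BIdx e m → ℂ) (k : ZMod e) :
    xval e m (xv ∘ tauB e d m hm) k = xval e m xv (k + d) := by
  funext i
  simp only [xval, hm]
  rfl

theorem vvE_comp_tauB (xv : BIdx e m → ℂ) (k : ℕ) :
    vvE e m (xv ∘ tauB e d m hm) k = xval e m xv ((k : ZMod e) + d) :=
  xval_comp_tauB hm xv k

end ThetaOnFunctions

section SymmetricFunctions

variable {e : ℕ} [NeZero e]

/-- The power sum `p_γ`, as a function of the variables `x_i^{(k)}`. -/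
noncomputable def powerSumFun (m : ZMod e → ℕ) (ζ : ℂ) (γ : ZMod e → Multiset ℕ) :
    (BIdx e m → ℂ) → ℂ :=
  fun xv => pAlphaSys ζ e (mmX e m) (vvE e m xv) (liftE e γ)

/-- The Schur function `s_γ`, as a function of the variables `x_i^{(k)}`. -/
noncomputable def schurFun (m : ZMod e → ℕ) (γ : ZMod e → Multiset ℕ) : (BIdx e m → ℂ) → ℂ :=
  fun xv => sAlphaSys e (mmX e m) (vvE e m xv) (liftE e γ)

/-- The monomial function `m_γ`, as a function of the variables `x_i^{(k)}`. -/
noncomputable def monomialFun (m : ZMod e → ℕ) (γ : ZMod e → Multiset ℕ) : (BIdx e m → ℂ) → ℂ :=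
  fun xv => mAlphaSys e (mmX e m) (vvE e m xv) (liftE e γ)

/-- The function `q_{γ,±}(x;t)`, as a function of the variables `x_i^{(k)}`; the sign is `+` for
`sgn = true`. -/
noncomputable def qFun (m : ZMod e → ℕ) (t : ℂ) (sgn : Bool) (γ : ZMod e → Multiset ℕ) :
    (BIdx e m → ℂ) → ℂ :=
  fun xv => qAlphaSys t e (mmX e m) (vvE e m xv) sgn (liftE e γ)

/-- The function `q_r(v, w; t)` of two families of `N` and `N'` variables, of which
`q_{r,±}^{(k)}(x;t)` is the case `v = x^{(k)}`, `w = x^{(k±1)}`. -/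
noncomputable def qPair (t : ℂ) (N N' : ℕ) (v w : ℕ → ℂ) (r : ℕ) : ℂ :=
  if r = 0 then 1 else
    ∑ i ∈ Finset.range N,
      v i ^ ((r : ℤ) + (N : ℤ) - 1 - (N' : ℤ)) * (∏ j ∈ Finset.range N', (v i - t * w j)) /
        ∏ j ∈ (Finset.range N).erase i, (v i - v j)

theorem natCast_neighbour (e : ℕ) [NeZero e] (sgn : Bool) (k : ℕ) :
    ((if sgn then (k + 1) % e else (k + e - 1) % e : ℕ) : ZMod e) =
      (k : ZMod e) + if sgn then 1 else -1 := by
  have hpos : 1 ≤ k + e := le_add_left (NeZero.one_le : 1 ≤ e)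
  cases sgn <;> simp [ZMod.natCast_mod, Nat.cast_sub hpos, sub_eq_add_neg]

theorem qGenSys_eq_qPair (m : ZMod e → ℕ) (t : ℂ) (sgn : Bool) (xv : BIdx e m → ℂ) (k : ℕ) :
    qGenSys t e (mmX e m) (vvE e m xv) sgn k =
      qPair t (m k) (m (k + if sgn then 1 else -1)) (xval e m xv k)
        (xval e m xv (k + if sgn then 1 else -1)) := by
  funext r
  simp only [qGenSys, qPair, mmX, vvE, natCast_neighbour]

variable {d : ℕ} {m : ZMod e → ℕ} (hm : ∀ k, m (k + (d : ZMod e)) = m k)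

theorem semiconj_schurFun : Function.Semiconj (schurFun m) (theta e d) (shiftOperator hm) := by
  intro γ
  funext xv
  let G (k : ZMod e) : ℂ := schurFin (m k) (theta e d γ k) (xval e m xv k)
  calc schurFun m (theta e d γ) xv
      = ∏ k ∈ Finset.range e, G (k + d) := (prod_range_natCast_zmod_add e G d).symm
    _ = schurFun m γ (xv ∘ tauB e d m hm) := by
      simp only [G, schurFun, sAlphaSys, theta_apply_add, hm, vvE_comp_tauB, mmX, liftE]

theorem semiconj_monomialFun :
    Function.Semiconj (monomialFun m) (theta e d) (shiftOperator hm) := by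
  intro γ
  funext xv
  let G (k : ZMod e) : ℂ := monoFin (m k) (theta e d γ k) (xval e m xv k)
  calc monomialFun m (theta e d γ) xv
      = ∏ k ∈ Finset.range e, G (k + d) := (prod_range_natCast_zmod_add e G d).symm
    _ = monomialFun m γ (xv ∘ tauB e d m hm) := by
      simp only [G, monomialFun, mAlphaSys, theta_apply_add, hm, vvE_comp_tauB, mmX, liftE]

theorem semiconj_qFun (t : ℂ) (sgn : Bool) :
    Function.Semiconj (qFun m t sgn) (theta e d) (shiftOperator hm) := by
  intro γ
  funext xv
  let s : ZMod e := if sgn then 1 else -1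
  let G (k : ZMod e) : ℂ :=
    ((theta e d γ k).map
      (qPair t (m k) (m (k + s)) (xval e m xv k) (xval e m xv (k + s)))).prod
  calc qFun m t sgn (theta e d γ) xv
      = ∏ k ∈ Finset.range e, G k := by simp only [G, s, qFun, qAlphaSys, qGenSys_eq_qPair, liftE]
    _ = ∏ k ∈ Finset.range e, G (k + d) := (prod_range_natCast_zmod_add e G d).symm
    _ = qFun m t sgn γ (xv ∘ tauB e d m hm) := by
      simp only [G, s, qFun, qAlphaSys, qGenSys_eq_qPair, theta_apply_add, xval_comp_tauB, hm,
        add_right_comm _ (d : ZMod e), liftE]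

theorem pow_mul_pGenSys_comp_tauB {ζ : ℂ} (hζ : ζ ^ e = 1) (xv : BIdx e m → ℂ) (i : ℕ) {r : ℕ}
    (hr : r ≠ 0) :
    ζ ^ (i * d) * pGenSys ζ e (mmX e m) (vvE e m (xv ∘ tauB e d m hm)) i r =
      pGenSys ζ e (mmX e m) (vvE e m xv) i r := by
  have hζi : (ζ ^ i) ^ e = 1 := by rw [pow_right_comm, hζ, one_pow]
  let χ : AddChar (ZMod e) ℂ := AddChar.zmodChar e hζi
  have hχ (k : ℕ) : χ k = ζ ^ (i * k) := by rw [AddChar.zmodChar_apply', pow_mul]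
  let P (k : ZMod e) : ℂ := ∑ s ∈ Finset.range (m k), xval e m xv k s ^ r
  calc ζ ^ (i * d) * pGenSys ζ e (mmX e m) (vvE e m (xv ∘ tauB e d m hm)) i r
      = ∑ k ∈ Finset.range e, χ (k + d) * P (k + d) := by
        simp only [pGenSys, if_neg hr, vvE_comp_tauB, mmX, P, hm, AddChar.map_add_eq_mul, hχ,
          Finset.mul_sum, mul_assoc, mul_left_comm]
    _ = ∑ k ∈ Finset.range e, χ k * P k :=
        sum_range_natCast_zmod_add e (fun k => χ k * P k) d
    _ = pGenSys ζ e (mmX e m) (vvE e m xv) i r := by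
        simp only [hχ, pGenSys, if_neg hr, P, mmX, vvE]

theorem shiftOperator_powerSumFun {ζ : ℂ} (hζ : ζ ^ e = 1) {γ : ZMod e → Multiset ℕ}
    (hγ : ∀ k, ∀ r ∈ γ k, 0 < r) :
    shiftOperator hm (powerSumFun m ζ γ) = ((ζ ^ d) ^ Delta e γ)⁻¹ • powerSumFun m ζ γ := by
  have hζ0 : ζ ≠ 0 := (IsUnit.of_pow_eq_one hζ (NeZero.ne e)).ne_zero
  have hscale : (ζ ^ d) ^ Delta e γ = ∏ k ∈ Finset.range e, (ζ ^ (k * d)) ^ (liftE e γ k).card := by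
    rw [Delta_eq_sum_range, ← Finset.prod_pow_eq_pow_sum]
    exact Finset.prod_congr rfl fun k _ => by ring
  rw [eq_inv_smul_iff₀ (pow_ne_zero _ (pow_ne_zero _ hζ0))]
  funext xv
  calc (ζ ^ d) ^ Delta e γ * powerSumFun m ζ γ (xv ∘ tauB e d m hm)
      = ∏ k ∈ Finset.range e, ((liftE e γ k).map fun r => ζ ^ (k * d) *
          pGenSys ζ e (mmX e m) (vvE e m (xv ∘ tauB e d m hm)) k r).prod := by
        simp only [hscale, powerSumFun, pAlphaSys, ← Finset.prod_mul_distrib,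
          Multiset.prod_map_mul, Multiset.map_const', Multiset.prod_replicate]
    _ = powerSumFun m ζ γ xv :=
        Finset.prod_congr rfl fun k _ => congrArg Multiset.prod <| Multiset.map_congr rfl
          fun r hr => pow_mul_pGenSys_comp_tauB hm hζ xv k (hγ _ r hr).ne'

end SymmetricFunctions

section ThetaFormulas

variable {e p d : ℕ} [NeZero e] {m : ZMod e → ℕ} (hm : ∀ k, m (k + (d : ZMod e)) = m k)

theorem Theta_apply_powerSumFun (hpd : p * d = e) {ζ : ℂ} (hζ : IsPrimitiveRoot ζ e) (q : ℕ)
    {β : ZMod e → Multiset ℕ} (hβ : ∀ k, ∀ r ∈ β k, 0 < r)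
    (xv : BIdx e m → ℂ) :
    Theta hm p q ζ (powerSumFun m ζ β) xv =
      if (Delta e β : ZMod p) = (q : ZMod p) then (p : ℂ) * powerSumFun m ζ β xv else 0 := by
  have hω : IsPrimitiveRoot (ζ ^ d) p := hζ.pow (NeZero.pos e) (by rw [← hpd, mul_comm])
  rw [Theta, twistedSum_apply_of_apply_eq_inv_pow_smul hω q
    (shiftOperator_powerSumFun hm hζ.pow_eq_one hβ)]
  split_ifs <;> rfl

theorem Theta_apply_of_semiconj (hpd : p * d = e) {ζ : ℂ} (hζ : IsPrimitiveRoot ζ e) (q : ℕ)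
    {f : (ZMod e → Multiset ℕ) → (BIdx e m → ℂ) → ℂ}
    (hf : Function.Semiconj f (theta e d) (shiftOperator hm)) (α : ZMod e → Multiset ℕ)
    (xv : BIdx e m → ℂ) :
    Theta hm p q ζ (f α) xv =
      if p ∣ q * csize e d α then
        ((p / csize e d α : ℕ) : ℂ) *
          ∑ i ∈ Finset.range (csize e d α), ζ ^ (q * i * d) * f ((theta e d)^[i] α) xv
      else 0 := by
  have hω : IsPrimitiveRoot (ζ ^ d) p := hζ.pow (NeZero.pos e) (by rw [← hpd, mul_comm])
  rw [Theta, twistedSum_apply_of_semiconj hω q hf (isPeriodicPt_theta hpd α), csize]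
  split_ifs
  · simp only [Pi.smul_apply, Finset.sum_apply, smul_eq_mul, ← pow_mul, mul_comm d]
  · rfl

theorem statement8_general (hpd : p * d = e) {ζ : ℂ} (hζ : IsPrimitiveRoot ζ e) (q : ℕ)
    {β : ZMod e → Multiset ℕ} (hβ : ∀ k, ∀ r ∈ β k, 0 < r)
    (α : ZMod e → Multiset ℕ) (t : ℂ) :
    (∀ xv, Theta hm p q ζ (powerSumFun m ζ β) xv =
      if (Delta e β : ZMod p) = (q : ZMod p) then (p : ℂ) * powerSumFun m ζ β xv else 0)
    ∧
    (∀ xv, Theta hm p q ζ (schurFun m α) xv =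
      if p ∣ q * csize e d α then
        ((p / csize e d α : ℕ) : ℂ) *
          ∑ i ∈ Finset.range (csize e d α), ζ ^ (q * i * d) * schurFun m ((theta e d)^[i] α) xv
      else 0)
    ∧
    (∀ xv, Theta hm p q ζ (monomialFun m α) xv =
      if p ∣ q * csize e d α then
        ((p / csize e d α : ℕ) : ℂ) *
          ∑ i ∈ Finset.range (csize e d α), ζ ^ (q * i * d) * monomialFun m ((theta e d)^[i] α) xv
      else 0)
    ∧
    (∀ sgn xv,
      (∀ k : ZMod e, ∀ i j : ℕ, i < m k → j < m k → i ≠ j →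
          xval e m xv k i ≠ xval e m xv k j) →
      (∀ k : ZMod e, ∀ i : ℕ, i < m k → xval e m xv k i ≠ 0) →
      Theta hm p q ζ (qFun m t sgn α) xv =
        if p ∣ q * csize e d α then
          ((p / csize e d α : ℕ) : ℂ) *
            ∑ i ∈ Finset.range (csize e d α), ζ ^ (q * i * d) * qFun m t sgn ((theta e d)^[i] α) xv
        else 0) :=
  ⟨Theta_apply_powerSumFun hm hpd hζ q hβ,
    Theta_apply_of_semiconj hm hpd hζ q (semiconj_schurFun hm) α,
    Theta_apply_of_semiconj hm hpd hζ q (semiconj_monomialFun hm) α,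
    fun sgn xv _ _ => Theta_apply_of_semiconj hm hpd hζ q (semiconj_qFun hm t sgn) α xv⟩

end ThetaFormulas

/-- (3.3.4), (3.3.5).  Let `Θ_q = ∑_{i=0}^{p-1} ζ^{qid} θ^i`
act on polynomials in the `x_i^{(k)}` via `θ(x_j^{(k)}) = x_j^{(k+d)}` (in
evaluated form, `(θF)(xv) = F(xv ∘ τ_V)`).  Then:
(a) `Θ_q(p_β) = p·p_β` if `Δ(β) ≡ q (mod p)`, and `= 0` otherwise;
(b) `Θ_q(s_α) = (p/c) ∑_{i<c} ζ^{qid} s_{θ^i(α)}` if `qc ≡ 0 (mod p)`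
(`c = c_{α,p}`), and `= 0` otherwise; and the same formula holds with `s`
replaced by the monomial functions `m` and by the functions `q_{·,±}`. -/
theorem statement8 (e p d n q : ℕ) [NeZero e] [NeZero n] (hp : p ∣ e) (hd : d = e / p)
    (hq : q ∣ e)
    (ζ : ℂ) (hζ : IsPrimitiveRoot ζ e)
    (m : ZMod e → ℕ) (hmn : ∀ k, n ≤ m k) (hm : ∀ k, m (k + (d : ZMod e)) = m k)
    (β α : ZMod e → Multiset ℕ)
    (hβ : IsEPartition e n β) (hα : IsEPartition e n α) (t : ℂ) :
    (∀ xv : BIdx e m → ℂ,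
      (∑ i ∈ Finset.range p, ζ ^ (q * i * d) *
          pAlphaSys ζ e (mmX e m) (vvE e m (xv ∘ (tauB e d m hm)^[i])) (liftE e β)) =
        if (Delta e β : ZMod p) = (q : ZMod p) then
          (p : ℂ) * pAlphaSys ζ e (mmX e m) (vvE e m xv) (liftE e β)
        else 0)
    ∧
    (∀ xv : BIdx e m → ℂ,
      (∑ i ∈ Finset.range p, ζ ^ (q * i * d) *
          sAlphaSys e (mmX e m) (vvE e m (xv ∘ (tauB e d m hm)^[i])) (liftE e α)) =
        if p ∣ q * csize e d α then
          ((p / csize e d α : ℕ) : ℂ) *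
            ∑ i ∈ Finset.range (csize e d α), ζ ^ (q * i * d) *
              sAlphaSys e (mmX e m) (vvE e m xv) (liftE e ((theta e d)^[i] α))
        else 0)
    ∧
    (∀ xv : BIdx e m → ℂ,
      (∑ i ∈ Finset.range p, ζ ^ (q * i * d) *
          mAlphaSys e (mmX e m) (vvE e m (xv ∘ (tauB e d m hm)^[i])) (liftE e α)) =
        if p ∣ q * csize e d α then
          ((p / csize e d α : ℕ) : ℂ) *
            ∑ i ∈ Finset.range (csize e d α), ζ ^ (q * i * d) *
              mAlphaSys e (mmX e m) (vvE e m xv) (liftE e ((theta e d)^[i] α))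
        else 0)
    ∧
    (∀ sgn : Bool, ∀ xv : BIdx e m → ℂ,
      (∀ k : ZMod e, ∀ i j : ℕ, i < m k → j < m k → i ≠ j →
          xval e m xv k i ≠ xval e m xv k j) →
      (∀ k : ZMod e, ∀ i : ℕ, i < m k → xval e m xv k i ≠ 0) →
      (∑ i ∈ Finset.range p, ζ ^ (q * i * d) *
          qAlphaSys t e (mmX e m) (vvE e m (xv ∘ (tauB e d m hm)^[i])) sgn (liftE e α)) =
        if p ∣ q * csize e d α then
          ((p / csize e d α : ℕ) : ℂ) *
            ∑ i ∈ Finset.range (csize e d α), ζ ^ (q * i * d) *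
              qAlphaSys t e (mmX e m) (vvE e m xv) sgn (liftE e ((theta e d)^[i] α))
        else 0) := by
  have hpd : p * d = e := by rw [hd, Nat.mul_div_cancel' hp]
  simpa only [Theta_apply, powerSumFun, schurFun, monomialFun, qFun] using
    statement8_general hm hpd hζ q hβ.1 α t

end GreenII
end
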